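/- arXiv:1507.03029 — 3 statements merged into one kernel-verified Lean document; each statement's English description precedes it below -/
import Mathlib

section
/- Let $X \subseteq \mathbb{P}^m$ be an equidimensional projective variety defined over $\mathbb{F}_q$ of degree $\delta$ and dimension $n$. Then the number of $\mathbb{F}_q$-rational points of $X$ satisfies $|X(\mathbb{F}_q)| \le \delta \, p_n$, where $p_n = q^n + q^{n-1} + \cdots + q + 1$. -/
open MvPolynomial

/-- `pp q k` is the number of points of `ℙ^k(F_q)`, with the convention that it is `0`
for negative `k`. -/
noncomputable def pp (q : ℕ) (k : ℤ) : ℕ :=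
  if k < 0 then 0 else ∑ i ∈ Finset.range (k.toNat + 1), q ^ i

/-!
Hilbert functions play the role of degrees. For a prime `P` and a form `f ∉ P` of degree one,
multiplication by `f` gives `HF P j + HF (P + (f)) (j + 1) ≤ HF P (j + 1)`. A rational point of
`X = V(P)` lies on the hyperplane `f = 0` for a known proportion of the linear forms modulo `P`, so
some `f ∉ P` has `|X(K)| p_n ≤ p_{n + 1} |(X ∩ {f = 0})(K)|`; here Krull's height theorem provides
enough linear forms and keeps every component of the section of dimension at least one less. By
induction on the dimension `n`, with the Hilbert functions of the minimal primes of an ideal adding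
up to at most that of the ideal after a shift, `|X(K)| (j + n choose n) ≤ p_n HF (j + c)` for some
constant `c`. Comparing leading coefficients in `j` gives the bound.
-/

section KrullDimension

theorem height_eq_height_comap_C_add {R : Type*} [CommRing R] [IsNoetherianRing R]
    [IsJacobsonRing R] {s : ℕ} (M : Ideal (MvPolynomial (Fin s) R)) [M.IsMaximal] :
    M.height = (M.comap C).height + s := by
  induction s with
  | zero =>
    have : (isEmptyRingEquiv R (Fin 0)).symm.toRingHom = C := rfl
    rw [← this, Nat.cast_zero, add_zero]
    exact ((isEmptyRingEquiv R (Fin 0)).symm.height_comap M).symm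
  | succ s ih =>
    let e := (finSuccEquiv R s).symm.toRingEquiv
    let P : Ideal (Polynomial (MvPolynomial (Fin s) R)) := M.comap e
    have : P.IsMaximal := Ideal.comap_isMaximal_of_equiv e
    have : (P.under (MvPolynomial (Fin s) R)).IsMaximal :=
      Polynomial.isMaximal_comap_C_of_isJacobsonRing P
    have : P.LiesOver (P.under (MvPolynomial (Fin s) R)) := ⟨rfl⟩
    have hC : (P.under (MvPolynomial (Fin s) R)).comap C = M.comap C := by
      ext r
      have : e (Polynomial.C (C r)) = C r := (finSuccEquiv R s).symm.commutes r
      simp [P, Ideal.under, Ideal.mem_comap, this]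
    rw [← e.height_comap M, Polynomial.height_eq_height_add_one (P.under _) P, ih, hC]
    push_cast
    rw [add_assoc]

theorem ringKrullDim_le_of_isIntegral (R S : Type*) [CommRing R] [CommRing S] [Algebra R S]
    [Algebra.IsIntegral R S] : ringKrullDim S ≤ ringKrullDim R :=
  Order.krullDim_le_of_strictMono (PrimeSpectrum.comap (algebraMap R S))
    fun _ _ h ↦ Ideal.IsIntegral.comap_lt_comap h

theorem ringKrullDim_le_of_isIntegral_of_injective {R S : Type*} [CommRing R] [CommRing S]
    [Algebra R S] [Algebra.IsIntegral R S] (h : Function.Injective (algebraMap R S)) :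
    ringKrullDim R ≤ ringKrullDim S := by
  rcases subsingleton_or_nontrivial R with _ | _
  · exact ringKrullDim_eq_bot_of_subsingleton.trans_le bot_le
  refine iSup_le fun l ↦ ?_
  have hker : RingHom.ker (algebraMap R S) ≤ l.head.asIdeal :=
    ((RingHom.injective_iff_ker_eq_bot _).mp h).trans_le bot_le
  obtain ⟨Q, -, _, hQl⟩ := Ideal.exists_ideal_over_prime_of_isIntegral l.head.asIdeal ⊥ hker
  have : Q.LiesOver l.head.asIdeal := ⟨hQl.symm⟩
  obtain ⟨l', hl', -⟩ := Ideal.exists_ltSeries_of_hasGoingUp l Q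
  rw [← hl']
  exact le_iSup (fun p : LTSeries (PrimeSpectrum S) ↦ (p.length : WithBot ℕ∞)) l'

theorem ringKrullDim_le_quotient_add_one_of_uniqueFactorizationMonoid {A : Type*} [CommRing A]
    [IsDomain A] [IsNoetherianRing A] [UniqueFactorizationMonoid A]
    (hA : ∀ M : Ideal A, M.IsMaximal → ringKrullDim A ≤ M.height)
    (p : Ideal A) [p.IsPrime] (hp : p.height ≤ 1) :
    ringKrullDim A ≤ ringKrullDim (A ⧸ p) + 1 := by
  obtain ⟨f, hf⟩ : ∃ f, p = Ideal.span {f} := by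
    rcases eq_or_ne p ⊥ with rfl | h0
    · exact ⟨0, by simp⟩
    · have : p.height ≠ 0 := by rwa [Ne, Ideal.height_eq_zero_iff_eq_bot]
      exact (UniqueFactorizationMonoid.isPrincipal_of_height_eq_one
        (le_antisymm hp (Order.one_le_iff_ne_zero.mpr this))).principal
  obtain ⟨M, hM, hpM⟩ := p.exists_le_maximal (Ideal.IsPrime.ne_top ‹_›)
  have h := Ideal.height_le_ringKrullDim_quotient_add_one (p := M) (r := f)
    (hpM (hf ▸ Ideal.mem_span_singleton_self f))
  rw [← hf] at h
  exact (hA M hM).trans h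

theorem ringKrullDim_le_quotient_add_one_of_height_le_one (K : Type*) {A : Type*}
    [Field K] [CommRing A] [IsDomain A] [Algebra K A] [Algebra.FiniteType K A]
    (p : Ideal A) [p.IsPrime] (hp : p.height ≤ 1) :
    ringKrullDim A ≤ ringKrullDim (A ⧸ p) + 1 := by
  obtain ⟨s, g, hg, hgi⟩ := exists_integral_inj_algHom_of_fg K A
  algebraize [g.toRingHom]
  let R := MvPolynomial (Fin s) K
  have := Algebra.FiniteType.isNoetherianRing K A
  have : FaithfulSMul R A := (faithfulSMul_iff_algebraMap_injective _ _).mpr hg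
  have hp' : (p.under R).height ≤ 1 := by
    rw [Ideal.height_eq_height_add_of_liesOver_of_hasGoingDown (p.under R) p] at hp
    exact le_self_add.trans hp
  have hR (M : Ideal R) (_ : M.IsMaximal) : ringKrullDim R ≤ M.height := by
    rw [height_eq_height_comap_C_add, ringKrullDim_of_isNoetherianRing,
      ringKrullDim_eq_zero_of_field]
    simpa using mod_cast le_add_self
  calc ringKrullDim A ≤ ringKrullDim R := ringKrullDim_le_of_isIntegral _ _
    _ ≤ ringKrullDim (R ⧸ p.under R) + 1 :=
      ringKrullDim_le_quotient_add_one_of_uniqueFactorizationMonoid hR _ hp'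
    _ ≤ ringKrullDim (A ⧸ p) + 1 := by
      gcongr
      exact ringKrullDim_le_of_isIntegral_of_injective Ideal.algebraMap_quotient_injective

theorem ringKrullDim_quotient_le_of_mem_minimalPrimes_sup (K : Type*) {A : Type*}
    [Field K] [CommRing A] [Algebra K A] [Algebra.FiniteType K A]
    {P Q : Ideal A} [P.IsPrime] {f : A} (hQ : Q ∈ (P ⊔ Ideal.span {f}).minimalPrimes) :
    ringKrullDim (A ⧸ P) ≤ ringKrullDim (A ⧸ Q) + 1 := by
  have hPQ : P ≤ Q := le_sup_left.trans hQ.1.2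
  have := Algebra.FiniteType.isNoetherianRing K A
  have := hQ.1.1
  have : (Q.map (Ideal.Quotient.mk P)).IsPrime :=
    Ideal.map_isPrime_of_surjective Ideal.Quotient.mk_surjective (by simpa using hPQ)
  refine (ringKrullDim_le_quotient_add_one_of_height_le_one K _
    (Ideal.map_height_le_one_of_mem_minimalPrimes hQ)).trans_eq ?_
  rw [ringKrullDim_eq_of_ringEquiv (DoubleQuot.quotQuotEquivQuotOfLE hPQ)]

theorem ringKrullDim_le_finrank_of_adjoin_eq_top {K A : Type*} [Field K] [CommRing A]
    [Algebra K A] (V : Submodule K A) [Module.Finite K V]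
    (hV : Algebra.adjoin K (V : Set A) = ⊤) : ringKrullDim A ≤ Module.finrank K V := by
  let b := Module.finBasis K V
  have hb : (aeval (R := K) fun i ↦ (b i : A)).range = ⊤ := by
    have hspan : Submodule.span K (Set.range fun i ↦ (b i : A)) = V := by
      have h := congrArg (Submodule.map V.subtype) b.span_eq
      rwa [Submodule.map_span, ← Set.range_comp, V.map_subtype_top] at h
    rw [← Algebra.adjoin_range_eq_range_aeval, ← Algebra.adjoin_span, hspan, hV]
  have := ringKrullDim_le_of_surjective _ ((AlgHom.range_eq_top _).mp hb)
  simpa using this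

end KrullDimension

section Asymptotics

open Filter Polynomial Nat

variable {𝕜 : Type*} [NormedField 𝕜] [LinearOrder 𝕜] [IsStrictOrderedRing 𝕜] [OrderTopology 𝕜]
  [Archimedean 𝕜]

theorem coeff_nonneg_of_eventually_eval_nonneg {D : 𝕜[X]} {n : ℕ} (hn : D.natDegree ≤ n)
    (hD : ∀ᶠ j : ℕ in atTop, 0 ≤ D.eval (j : 𝕜)) : 0 ≤ D.coeff n := by
  rcases hn.lt_or_eq with hlt | rfl
  · exact (coeff_eq_zero_of_natDegree_lt hlt).ge
  by_contra! h
  rcases lt_or_ge 0 D.degree with hdeg | hdeg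
  · have hneg := ((D.tendsto_atBot_of_leadingCoeff_nonpos hdeg h.le).comp
      tendsto_natCast_atTop_atTop).eventually_lt_atBot 0
    obtain ⟨j, hj, hj'⟩ := (hD.and hneg).exists
    exact hj.not_gt hj'
  · obtain ⟨j, hj⟩ := hD.exists
    rw [eq_C_of_degree_le_zero hdeg, Polynomial.eval_C] at hj
    rw [natDegree_eq_zero_iff_degree_le_zero.mpr hdeg] at h
    exact hj.not_gt h

theorem coeff_le_coeff_of_eventually_eval_le {P Q : 𝕜[X]} {n : ℕ} (hP : P.natDegree ≤ n)
    (hQ : Q.natDegree ≤ n) (h : ∀ᶠ j : ℕ in atTop, P.eval (j : 𝕜) ≤ Q.eval (j : 𝕜)) :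
    P.coeff n ≤ Q.coeff n := by
  rw [← sub_nonneg, ← Polynomial.coeff_sub]
  refine coeff_nonneg_of_eventually_eval_nonneg (natDegree_sub_le_of_le hQ hP |>.trans_eq
    (max_self n)) (h.mono fun j hj ↦ ?_)
  rwa [Polynomial.eval_sub, sub_nonneg]

theorem coeff_taylor_of_natDegree_le {R : Type*} [CommSemiring R] (r : R) {P : R[X]} {n : ℕ}
    (hP : P.natDegree ≤ n) : (taylor r P).coeff n = P.coeff n := by
  rcases hP.lt_or_eq with hlt | rfl
  · rw [coeff_eq_zero_of_natDegree_lt hlt, coeff_eq_zero_of_natDegree_lt]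
    rwa [natDegree_taylor]
  · exact coeff_taylor_natDegree ..

theorem pow_le_factorial_mul_choose (j n : ℕ) : j ^ n ≤ n ! * (j + n).choose n := by
  rw [← Nat.ascFactorial_eq_factorial_mul_choose]
  exact (Nat.pow_le_pow_left j.le_succ n).trans (Nat.pow_succ_le_ascFactorial (j + 1) n)

theorem le_mul_coeff_of_eventually_mul_choose_le {P : 𝕜[X]} {N p : 𝕜} {n c : ℕ} (hN : 0 ≤ N)
    (hP : P.natDegree ≤ n)
    (h : ∀ᶠ j : ℕ in atTop, N * (j + n).choose n ≤ p * P.eval ((j + c : ℕ) : 𝕜)) :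
    N ≤ p * (n ! * P.coeff n) := by
  have hcoeff : (Polynomial.C N * Polynomial.X ^ n).coeff n ≤
      (Polynomial.C (p * n !) * taylor (c : 𝕜) P).coeff n := by
    refine coeff_le_coeff_of_eventually_eval_le (natDegree_C_mul_X_pow_le ..)
      ((natDegree_C_mul_le ..).trans ((natDegree_taylor ..).trans_le hP)) (h.mono fun j hj ↦ ?_)
    have hj' : (j : 𝕜) ^ n ≤ n ! * (j + n).choose n := mod_cast pow_le_factorial_mul_choose j n
    simp only [Polynomial.eval_mul, Polynomial.eval_C, Polynomial.eval_pow, Polynomial.eval_X,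
      taylor_eval]
    calc N * (j : 𝕜) ^ n ≤ N * (n ! * (j + n).choose n) := by gcongr
      _ = n ! * (N * (j + n).choose n) := by ring
      _ ≤ n ! * (p * P.eval ((j + c : ℕ) : 𝕜)) := by gcongr
      _ = p * n ! * P.eval (j + c : 𝕜) := by push_cast; ring
  rwa [coeff_C_mul_X_pow, if_pos rfl, Polynomial.coeff_C_mul, coeff_taylor_of_natDegree_le _ hP,
    mul_assoc] at hcoeff

end Asymptotics

section HomogeneousIdeals

variable {ι σ A : Type*} [CommRing A] [SetLike σ A] [AddSubmonoidClass σ A]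

theorem exists_mem_graded_notMem_of_not_le [DecidableEq ι] [AddMonoid ι] (𝒜 : ι → σ)
    [GradedRing 𝒜] {P Q : Ideal A} (hP : P.IsHomogeneous 𝒜) (h : ¬ P ≤ Q) :
    ∃ i, ∃ f ∈ 𝒜 i, f ∈ P ∧ f ∉ Q := by
  classical
  obtain ⟨f, hfP, hfQ⟩ := SetLike.not_le_iff_exists.mp h
  obtain ⟨i, hi⟩ : ∃ i, (DirectSum.decompose 𝒜 f i : A) ∉ Q := by
    by_contra! hc
    rw [← DirectSum.sum_support_decompose 𝒜 f] at hfQ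
    exact hfQ (sum_mem fun i _ ↦ hc i)
  exact ⟨i, _, SetLike.coe_mem _, hP i hfP, hi⟩

theorem isHomogeneous_of_mem_minimalPrimes [AddCommMonoid ι] [LinearOrder ι]
    [IsOrderedCancelAddMonoid ι] (𝒜 : ι → σ) [GradedRing 𝒜] {I P : Ideal A}
    (hI : I.IsHomogeneous 𝒜) (hP : P ∈ I.minimalPrimes) : P.IsHomogeneous 𝒜 := by
  have hcore := Ideal.toIdeal_homogeneousCore_le 𝒜 P
  have hIcore : I ≤ (P.homogeneousCore 𝒜).toIdeal :=
    hI.toIdeal_homogeneousCore_eq_self.ge.trans (Ideal.homogeneousCore_mono 𝒜 hP.1.2)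
  rw [(hP.2 ⟨hP.1.1.homogeneousCore, hIcore⟩ hcore).antisymm hcore]
  exact HomogeneousIdeal.isHomogeneous _

theorem exists_mem_graded_mem_notMem_of_pairwise_not_le [DecidableEq ι] [AddCommMonoid ι]
    (𝒜 : ι → σ) [GradedRing 𝒜] {κ : Type*} [Finite κ] {P : κ → Ideal A}
    (hprime : ∀ k, (P k).IsPrime) (hhom : ∀ k, (P k).IsHomogeneous 𝒜)
    (hP : Pairwise fun k l ↦ ¬ P k ≤ P l) (k : κ) :
    ∃ i, ∃ f ∈ 𝒜 i, (∀ l ≠ k, f ∈ P l) ∧ f ∉ P k := by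
  classical
  have := Fintype.ofFinite κ
  choose i f hf hfP hfk using fun l : {l // l ≠ k} ↦
    exists_mem_graded_notMem_of_not_le 𝒜 (hhom l) (hP l.2)
  refine ⟨∑ l, i l, ∏ l, f l, SetLike.prod_mem_graded 𝒜 i f fun l _ ↦ hf l, fun l hl ↦ ?_, ?_⟩
  · exact Ideal.mem_of_dvd _ (Finset.dvd_prod_of_mem f (Finset.mem_univ ⟨l, hl⟩)) (hfP ⟨l, hl⟩)
  · rw [(hprime k).prod_mem_iff]
    rintro ⟨l, -, hl⟩
    exact hfk l hl

end HomogeneousIdeals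

section LinearAlgebra

variable {K V W : Type*} [DivisionRing K] [AddCommGroup V] [Module K V] [AddCommGroup W]
  [Module K W]

theorem finrank_map_add_finrank_ker_inf (f : V →ₗ[K] W) (p : Submodule K V) [Module.Finite K p] :
    Module.finrank K (p.map f) + Module.finrank K ↥(LinearMap.ker f ⊓ p) = Module.finrank K p := by
  rw [← LinearMap.finrank_range_add_finrank_ker (f.domRestrict p), LinearMap.range_domRestrict,
    LinearMap.ker_domRestrict, ← Submodule.finrank_map_subtype_eq, Submodule.map_comap_subtype,
    inf_comm]

theorem finrank_map_of_disjoint_ker {f : V →ₗ[K] W} {p : Submodule K V}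
    (h : Disjoint p (LinearMap.ker f)) : Module.finrank K (p.map f) = Module.finrank K p := by
  rw [← LinearMap.range_domRestrict,
    LinearMap.finrank_range_of_inj (LinearMap.injective_domRestrict_iff.mpr h)]

theorem exists_le_disjoint_ker_and_map_eq (f : V →ₗ[K] W) (p : Submodule K V) :
    ∃ q ≤ p, Disjoint q (LinearMap.ker f) ∧ q.map f = p.map f := by
  obtain ⟨q, hq, hsup⟩ :=
    IsModularLattice.exists_disjoint_and_sup_eq (inf_le_right : LinearMap.ker f ⊓ p ≤ p)
  have hqp : q ≤ p := le_sup_right.trans_eq hsup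
  refine ⟨q, hqp, ?_, ?_⟩
  · rw [disjoint_iff, eq_bot_iff, ← hq.eq_bot]
    exact le_inf (le_inf inf_le_right (inf_le_left.trans hqp)) inf_le_left
  · have hker : (LinearMap.ker f ⊓ p).map f = ⊥ :=
      LinearMap.le_ker_iff_map.mp inf_le_left
    rw [← hsup, Submodule.map_sup, hker, bot_sup_eq]

end LinearAlgebra

section HilbertFunction

variable {K A : Type*} [Field K] [CommRing A] [Algebra K A] (𝒜 : ℕ → Submodule K A)

/-- The Hilbert function `j ↦ dim_K (A / I)_j` of the quotient of a graded algebra `A = ⨁ 𝒜 j` by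
an ideal, the graded piece `(A / I)_j` being encoded as the image of `𝒜 j` in `A ⧸ I`. -/
noncomputable def hilbertFun (I : Ideal A) (j : ℕ) : ℕ :=
  Module.finrank K ((𝒜 j).map (Ideal.Quotient.mkₐ K I).toLinearMap)

theorem ker_toLinearMap_mkₐ (I : Ideal A) :
    LinearMap.ker (Ideal.Quotient.mkₐ K I).toLinearMap = I.restrictScalars K := by
  ext x
  exact Ideal.Quotient.eq_zero_iff_mem

theorem exists_le_finrank_eq_hilbertFun (I : Ideal A) (j : ℕ) :
    ∃ U ≤ 𝒜 j, (∀ u ∈ U, u ∈ I → u = 0) ∧ Module.finrank K U = hilbertFun 𝒜 I j := by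
  obtain ⟨U, hU, hdisj, hmap⟩ :=
    exists_le_disjoint_ker_and_map_eq (Ideal.Quotient.mkₐ K I).toLinearMap (𝒜 j)
  refine ⟨U, hU, fun u hu hI ↦ ?_, ?_⟩
  · rw [ker_toLinearMap_mkₐ] at hdisj
    exact Submodule.disjoint_def.mp hdisj u hu hI
  · rw [hilbertFun, ← hmap, finrank_map_of_disjoint_ker hdisj]

variable {𝒜} in
theorem exists_mem_notMem_of_hilbertFun_pos {I : Ideal A} {j : ℕ} (h : 0 < hilbertFun 𝒜 I j) :
    ∃ x ∈ 𝒜 j, x ∉ I := by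
  by_contra! hI
  have hker : 𝒜 j ≤ LinearMap.ker (Ideal.Quotient.mkₐ K I).toLinearMap := by
    rwa [ker_toLinearMap_mkₐ]
  rw [hilbertFun, LinearMap.le_ker_iff_map.mp hker, finrank_bot] at h
  exact h.false

variable [∀ j, Module.Finite K (𝒜 j)]

theorem hilbertFun_eq_sub (I : Ideal A) (j : ℕ) : hilbertFun 𝒜 I j =
    Module.finrank K (𝒜 j) - Module.finrank K ↥(I.restrictScalars K ⊓ 𝒜 j) := by
  have h := finrank_map_add_finrank_ker_inf (Ideal.Quotient.mkₐ K I).toLinearMap (𝒜 j)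
  rw [ker_toLinearMap_mkₐ] at h
  exact Nat.eq_sub_of_add_eq h

variable {𝒜}

theorem finrank_le_hilbertFun {I : Ideal A} {j : ℕ} {U : Type*} [AddCommGroup U] [Module K U]
    (φ : U →ₗ[K] A) (hφ : ∀ u, φ u ∈ 𝒜 j) (hI : ∀ u, φ u ∈ I → u = 0) :
    Module.finrank K U ≤ hilbertFun 𝒜 I j := by
  let π := (Ideal.Quotient.mkₐ K I).toLinearMap
  let ψ : U →ₗ[K] (𝒜 j).map π :=
    (π ∘ₗ φ).codRestrict _ fun u ↦ Submodule.mem_map_of_mem (hφ u)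
  refine LinearMap.finrank_le_finrank_of_injective (f := ψ) ?_
  refine (injective_iff_map_eq_zero ψ).mpr fun u hu ↦ hI u ?_
  exact Ideal.Quotient.eq_zero_iff_mem.mp (congrArg Subtype.val hu)

section GradedRing

variable [SetLike.GradedMonoid 𝒜]

theorem hilbertFun_pos {P : Ideal A} [P.IsPrime] {x : A} (hx : x ∈ 𝒜 1) (hxP : x ∉ P) (j : ℕ) :
    0 < hilbertFun 𝒜 P j := by
  have hxj : x ^ j ∉ P := fun h ↦ hxP (‹P.IsPrime›.mem_of_pow_mem j h)
  refine (Module.finrank_self K).symm.trans_le <|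
    finrank_le_hilbertFun (LinearMap.toSpanSingleton K A (x ^ j))
      (fun a ↦ Submodule.smul_mem _ a ?_) fun a ha ↦ ?_
  · simpa using SetLike.pow_mem_graded j hx
  · by_contra ha0
    exact hxj ((Submodule.smul_mem_iff (P.restrictScalars K) ha0).mp ha)

theorem hilbertFun_add_hilbertFun_sup_span_le {P : Ideal A} [P.IsPrime] {d : ℕ} {f : A}
    (hf : f ∈ 𝒜 d) (hfP : f ∉ P) (j : ℕ) :
    hilbertFun 𝒜 P j + hilbertFun 𝒜 (P ⊔ Ideal.span {f}) (d + j) ≤ hilbertFun 𝒜 P (d + j) := by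
  obtain ⟨U, hUj, hUP, hU⟩ := exists_le_finrank_eq_hilbertFun 𝒜 P j
  obtain ⟨V, hVj, hVP, hV⟩ := exists_le_finrank_eq_hilbertFun 𝒜 (P ⊔ Ideal.span {f}) (d + j)
  have := Submodule.finiteDimensional_of_le hUj
  have := Submodule.finiteDimensional_of_le hVj
  rw [← hU, ← hV, ← Module.finrank_prod]
  refine finrank_le_hilbertFun ((LinearMap.mulLeft K f ∘ₗ U.subtype).coprod V.subtype)
    (fun ⟨u, v⟩ ↦ add_mem (SetLike.mul_mem_graded hf (hUj u.2)) (hVj v.2)) fun ⟨u, v⟩ huv ↦ ?_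
  replace huv : f * (u : A) + v ∈ P := huv
  have hv : (v : A) = 0 := by
    refine hVP v v.2 ((Submodule.add_mem_iff_right _ ?_).mp (Ideal.mem_sup_left huv))
    exact Ideal.mul_mem_right _ _ (Ideal.mem_sup_right (Ideal.mem_span_singleton_self f))
  rw [hv, add_zero] at huv
  have hu := hUP u u.2 ((‹P.IsPrime›.mem_or_mem huv).resolve_left hfP)
  exact Prod.ext (Subtype.ext hu) (Subtype.ext hv)

theorem sum_hilbertFun_le {ι : Type*} [Fintype ι] {I : Ideal A} {P : ι → Ideal A}
    (hprime : ∀ i, (P i).IsPrime) (hIP : ∀ i, I ≤ P i) {t : ι → A} {d e : ι → ℕ} {N : ℕ}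
    (ht : ∀ i, t i ∈ 𝒜 (d i)) (hde : ∀ i, d i + e i = N) (htP : ∀ i, t i ∉ P i)
    (htP' : ∀ i, ∀ k ≠ i, t i ∈ P k) :
    ∑ i, hilbertFun 𝒜 (P i) (e i) ≤ hilbertFun 𝒜 I N := by
  classical
  choose U hUe hUP hU using fun i ↦ exists_le_finrank_eq_hilbertFun 𝒜 (P i) (e i)
  have (i : ι) := Submodule.finiteDimensional_of_le (hUe i)
  simp_rw [← hU, ← Module.finrank_pi_fintype K]
  let φ : (Π i, U i) →ₗ[K] A := ∑ i, LinearMap.mulLeft K (t i) ∘ₗ (U i).subtype ∘ₗ LinearMap.proj i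
  have hφ (u : Π i, U i) : φ u = ∑ i, t i * (u i : A) := LinearMap.sum_apply ..
  refine finrank_le_hilbertFun φ (fun u ↦ ?_) fun u hu ↦ funext fun i ↦ ?_
  · rw [hφ]
    exact sum_mem fun i _ ↦ hde i ▸ SetLike.mul_mem_graded (ht i) (hUe i (u i).2)
  · have hPi : t i * (u i : A) + ∑ k ∈ Finset.univ.erase i, t k * (u k : A) ∈ P i := by
      rw [Finset.add_sum_erase _ (fun k ↦ t k * (u k : A)) (Finset.mem_univ i), ← hφ]
      exact hIP i hu
    have hrest : ∑ k ∈ Finset.univ.erase i, t k * (u k : A) ∈ P i :=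
      sum_mem fun k hk ↦ Ideal.mul_mem_right _ _ (htP' k i (Finset.ne_of_mem_erase hk).symm)
    have hi := (Submodule.add_mem_iff_left _ hrest).mp hPi
    exact Subtype.ext (hUP i _ (u i).2 (((hprime i).mem_or_mem hi).resolve_left (htP i)))

end GradedRing

theorem exists_sum_hilbertFun_le [GradedAlgebra 𝒜] {ι : Type*} [Fintype ι] {I : Ideal A}
    {P : ι → Ideal A} (hprime : ∀ i, (P i).IsPrime) (hhom : ∀ i, (P i).IsHomogeneous 𝒜)
    (hP : Pairwise fun i k ↦ ¬ P i ≤ P k) (hIP : ∀ i, I ≤ P i)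
    (hx : ∀ i, ∃ x ∈ 𝒜 1, x ∉ P i) (c : ι → ℕ) :
    ∃ d, ∀ j, ∑ i, hilbertFun 𝒜 (P i) (j + c i) ≤ hilbertFun 𝒜 I (j + d) := by
  choose e f hf hfP hfi using
    exists_mem_graded_mem_notMem_of_pairwise_not_le 𝒜 hprime hhom hP
  choose x hx1 hxP using hx
  let d := ∑ i, (e i + c i)
  have hd (i : ι) : e i + c i ≤ d := Finset.single_le_sum_of_canonicallyOrdered
    (f := fun i ↦ e i + c i) (Finset.mem_univ i)
  refine ⟨d, fun j ↦ sum_hilbertFun_le (t := fun i ↦ f i * x i ^ (d - (e i + c i)))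
    (d := fun i ↦ e i + (d - (e i + c i)) • 1) hprime hIP (fun i ↦ ?_) (fun i ↦ ?_) (fun i h ↦ ?_)
    fun i k hki ↦ Ideal.mul_mem_right _ _ (hfP i k hki)⟩
  · exact SetLike.mul_mem_graded (hf i) (SetLike.pow_mem_graded _ (hx1 i))
  · have := hd i
    simp only [smul_eq_mul]
    omega
  · exact ((hprime i).mem_or_mem h).elim (hfi i) fun h ↦ hxP i ((hprime i).mem_of_pow_mem _ h)

theorem ringKrullDim_quotient_le_hilbertFun_one (h𝒜 : Algebra.adjoin K (𝒜 1 : Set A) = ⊤)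
    (I : Ideal A) : ringKrullDim (A ⧸ I) ≤ hilbertFun 𝒜 I 1 := by
  refine ringKrullDim_le_finrank_of_adjoin_eq_top _ ?_
  rw [Submodule.map_coe, AlgHom.coe_toLinearMap, ← AlgHom.map_adjoin, h𝒜, Algebra.map_top,
    AlgHom.range_eq_top]
  exact Ideal.Quotient.mkₐ_surjective K I

end HilbertFunction

section HyperplaneAveraging

variable {K U : Type*} [Field K] [Finite K] [AddCommGroup U] [Module K U]

theorem natCard_ne_zero_eq_geom_sum_mul [Module.Finite K U] :
    Nat.card {u : U // u ≠ 0} =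
      (∑ i ∈ Finset.range (Module.finrank K U), Nat.card K ^ i) * (Nat.card K - 1) := by
  classical
  have := Module.finite_of_finite K (M := U)
  have := Fintype.ofFinite U
  rw [Nat.card_eq_fintype_card, Fintype.card_subtype_compl, Fintype.card_subtype_eq,
    geom_sum_mul_of_one_le Finite.card_pos, ← Module.natCard_eq_pow_finrank,
    Nat.card_eq_fintype_card]

theorem natCard_ne_zero_and_apply_eq_zero {s : ℕ} (hs : Module.finrank K U = s + 1)
    {f : Module.Dual K U} (hf : f ≠ 0) :
    Nat.card {u : U // u ≠ 0 ∧ f u = 0} =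
      (∑ i ∈ Finset.range s, Nat.card K ^ i) * (Nat.card K - 1) := by
  have : Module.Finite K U := Module.finite_of_finrank_eq_succ hs
  have hker : Module.finrank K (LinearMap.ker f) = s :=
    Nat.succ_injective ((Module.Dual.finrank_ker_add_one_of_ne_zero hf).trans hs)
  rw [← hker, ← natCard_ne_zero_eq_geom_sum_mul]
  exact Nat.card_congr
    { toFun := fun u ↦ ⟨⟨u, u.2.2⟩, Subtype.coe_ne_coe.mp u.2.1⟩
      invFun := fun u ↦ ⟨u, Subtype.coe_ne_coe.mpr u.2, u.1.2⟩ }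

theorem exists_ne_zero_natCard_mul_geom_sum_le {s : ℕ} (hs : Module.finrank K U = s + 1)
    {ι : Type*} [Finite ι] (φ : ι → Module.Dual K U) (hφ : ∀ i, φ i ≠ 0) :
    ∃ u ≠ 0, Nat.card ι * ∑ i ∈ Finset.range s, Nat.card K ^ i ≤
      (∑ i ∈ Finset.range (s + 1), Nat.card K ^ i) * Nat.card {i // φ i u = 0} := by
  classical
  have : Module.Finite K U := Module.finite_of_finrank_eq_succ hs
  have := Module.finite_of_finite K (M := U)
  have := Fintype.ofFinite U
  have := Fintype.ofFinite ι
  have := Module.nontrivial_of_finrank_eq_succ hs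
  let nonzero : Finset U := {u | u ≠ 0}
  have hcard : nonzero.card =
      (∑ i ∈ Finset.range (s + 1), Nat.card K ^ i) * (Nat.card K - 1) := by
    rw [← hs, ← natCard_ne_zero_eq_geom_sum_mul, Nat.card_eq_fintype_card, Fintype.card_subtype]
  have hker (i : ι) : {u ∈ nonzero | φ i u = 0}.card =
      (∑ i ∈ Finset.range s, Nat.card K ^ i) * (Nat.card K - 1) := by
    rw [← natCard_ne_zero_and_apply_eq_zero hs (hφ i), Nat.card_eq_fintype_card,
      Fintype.card_subtype, Finset.filter_filter]
  obtain ⟨u, hu, hmax⟩ := nonzero.exists_max_image (fun u ↦ Nat.card {i // φ i u = 0})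
    (by simpa [nonzero, Finset.filter_nonempty_iff] using exists_ne 0)
  refine ⟨u, by simpa [nonzero] using hu, ?_⟩
  have hK : 0 < Nat.card K - 1 := Nat.sub_pos_of_lt Finite.one_lt_card
  refine Nat.le_of_mul_le_mul_right ?_ hK
  calc Nat.card ι * (∑ i ∈ Finset.range s, Nat.card K ^ i) * (Nat.card K - 1)
      = ∑ i, {u ∈ nonzero | φ i u = 0}.card := by
        simp [hker, mul_assoc]
    _ = ∑ u ∈ nonzero, Nat.card {i // φ i u = 0} := by
        simp only [Nat.card_eq_fintype_card, Fintype.card_subtype]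
        exact Finset.sum_card_bipartiteAbove_eq_sum_card_bipartiteBelow fun i u ↦ φ i u = 0
    _ ≤ nonzero.card * Nat.card {i // φ i u = 0} := Finset.sum_le_card_nsmul _ _ _ hmax
    _ = _ := by rw [hcard, mul_right_comm]

theorem mul_geom_sum_le_of_le {q N M s n : ℕ} (hns : n ≤ s)
    (h : N * ∑ i ∈ Finset.range s, q ^ i ≤ (∑ i ∈ Finset.range (s + 1), q ^ i) * M) :
    N * ∑ i ∈ Finset.range n, q ^ i ≤ (∑ i ∈ Finset.range (n + 1), q ^ i) * M := by
  have hmono : ∑ i ∈ Finset.range n, q ^ i ≤ ∑ i ∈ Finset.range s, q ^ i :=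
    Finset.sum_le_sum_of_subset (Finset.range_mono hns)
  -- With `S k = 1 + ⋯ + q ^ (k - 1)`, the ratio `S (k + 1) / S k = q + 1 / S k` decreases in `k`.
  rw [geom_sum_succ] at h ⊢
  generalize ∑ i ∈ Finset.range n, q ^ i = a at *
  generalize ∑ i ∈ Finset.range s, q ^ i = b at *
  rcases Nat.eq_zero_or_pos b with rfl | hb
  · simp [Nat.le_zero.mp hmono]
  refine Nat.le_of_mul_le_mul_right ?_ hb
  calc N * a * b = N * b * a := mul_right_comm ..
    _ ≤ (q * b + 1) * M * a := by gcongr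
    _ = (q * b * a + a) * M := by ring
    _ ≤ (q * b * a + b) * M := by gcongr
    _ = (q * a + 1) * M * b := by ring

end HyperplaneAveraging

section Summation

theorem sum_range_le_of_add_le_succ {M : Type*} [AddCommMonoid M] [PartialOrder M]
    [IsOrderedAddMonoid M] [CanonicallyOrderedAdd M] {F G : ℕ → M}
    (hFG : ∀ j, F j + G (j + 1) ≤ F (j + 1)) (c k : ℕ) :
    ∑ i ∈ Finset.range k, G (i + c + 1) ≤ F (k + c) := by
  induction k with
  | zero => simp
  | succ k ih =>
    rw [Finset.sum_range_succ, add_right_comm k 1 c]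
    exact (add_le_add_left ih _).trans (hFG (k + c))

theorem mul_choose_succ_le_of_add_le_succ {F G : ℕ → ℕ} (hFG : ∀ j, F j + G (j + 1) ≤ F (j + 1))
    {M n p c : ℕ} (hG : ∀ j, M * (j + n).choose n ≤ p * G (j + c)) (j : ℕ) :
    M * (j + (n + 1)).choose (n + 1) ≤ p * F (j + (c + 1)) :=
  calc M * (j + (n + 1)).choose (n + 1)
      = ∑ i ∈ Finset.range (j + 1), M * (i + n).choose n := by
        rw [← Finset.mul_sum, Nat.sum_range_add_choose, add_assoc]
    _ ≤ ∑ i ∈ Finset.range (j + 1), M * (i + 1 + n).choose n := by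
        gcongr
        omega
    _ ≤ ∑ i ∈ Finset.range (j + 1), p * G (i + c + 1) :=
        Finset.sum_le_sum fun i _ ↦ (hG (i + 1)).trans_eq (by rw [add_right_comm])
    _ ≤ p * F (j + (c + 1)) := by
        rw [← Finset.mul_sum, ← add_assoc, add_right_comm]
        gcongr
        exact sum_range_le_of_add_le_succ hFG c (j + 1)

end Summation

section ProjectivePoints

attribute [local instance] MvPolynomial.gradedAlgebra

variable {σ K : Type*} [Field K]

theorem finite_homogeneousSubmodule [Finite σ] (j : ℕ) :
    Module.Finite K (homogeneousSubmodule σ K j) :=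
  Module.Finite.iff_fg.mpr (homogeneousSubmodule_fg σ K j)

attribute [local instance] finite_homogeneousSubmodule

theorem adjoin_homogeneousSubmodule_one :
    Algebra.adjoin K (homogeneousSubmodule σ K 1 : Set (MvPolynomial σ K)) = ⊤ := by
  refine top_unique (adjoin_range_X.ge.trans (Algebra.adjoin_mono ?_))
  rintro _ ⟨i, rfl⟩
  exact isHomogeneous_X K i

theorem hilbertFun_one_pos_of_one_le_ringKrullDim [Finite σ] {I : Ideal (MvPolynomial σ K)}
    (hI : 1 ≤ ringKrullDim (MvPolynomial σ K ⧸ I)) :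
    0 < hilbertFun (homogeneousSubmodule σ K) I 1 := by
  have := hI.trans (ringKrullDim_quotient_le_hilbertFun_one adjoin_homogeneousSubmodule_one I)
  exact_mod_cast this

/-- The `K`-rational points of the closed subscheme of projective space cut out by `I`. For
elements of `I` that are not homogeneous, vanishing is tested at the representative `x.rep`. -/
def projectiveZeros (I : Ideal (MvPolynomial σ K)) : Set (Projectivization K (σ → K)) :=
  {x | ∀ f ∈ I, eval x.rep f = 0}

theorem projectiveZeros_sup_span_singleton (I : Ideal (MvPolynomial σ K)) (f : MvPolynomial σ K) :
    projectiveZeros (I ⊔ Ideal.span {f}) = {x ∈ projectiveZeros I | eval x.rep f = 0} := by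
  ext x
  change I ⊔ Ideal.span {f} ≤ RingHom.ker (eval x.rep) ↔ I ≤ RingHom.ker (eval x.rep) ∧ _
  rw [sup_le_iff, Ideal.span_singleton_le_iff_mem, RingHom.mem_ker]

theorem projectiveZeros_subset_iUnion_minimalPrimes (I : Ideal (MvPolynomial σ K)) :
    projectiveZeros I ⊆ ⋃ Q : I.minimalPrimes, projectiveZeros Q.1 := by
  intro x hx
  have := RingHom.ker_isPrime (eval x.rep)
  obtain ⟨Q, hQ, hQx⟩ := Ideal.exists_minimalPrimes_le (J := RingHom.ker (eval x.rep)) hx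
  exact Set.mem_iUnion.mpr ⟨⟨Q, hQ⟩, hQx⟩

/-- The homogeneous prime ideal of a rational point `x` of projective space, which is generated by
the forms vanishing at `x`. -/
noncomputable def pointIdeal (x : Projectivization K (σ → K)) : Ideal (MvPolynomial σ K) :=
  ((RingHom.ker (eval x.rep)).homogeneousCore (homogeneousSubmodule σ K)).toIdeal

variable {x y : Projectivization K (σ → K)}

theorem isHomogeneous_pointIdeal : (pointIdeal x).IsHomogeneous (homogeneousSubmodule σ K) :=
  HomogeneousIdeal.isHomogeneous _

theorem isPrime_pointIdeal : (pointIdeal x).IsPrime :=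
  (RingHom.ker_isPrime (eval x.rep)).homogeneousCore

theorem mem_pointIdeal_iff {f : MvPolynomial σ K} {d : ℕ} (hf : f.IsHomogeneous d) :
    f ∈ pointIdeal x ↔ eval x.rep f = 0 :=
  ⟨fun h ↦ Ideal.toIdeal_homogeneousCore_le _ _ h,
    fun h ↦ Ideal.mem_homogeneousCore_of_homogeneous_of_mem ⟨d, hf⟩ h⟩

theorem le_pointIdeal_of_mem_projectiveZeros {I : Ideal (MvPolynomial σ K)}
    (hI : I.IsHomogeneous (homogeneousSubmodule σ K)) (hx : x ∈ projectiveZeros I) :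
    I ≤ pointIdeal x := by
  rw [← hI.toIdeal_homogeneousCore_eq_self]
  exact Ideal.homogeneousCore_mono _ hx

variable (x) in
theorem exists_X_notMem_pointIdeal : ∃ i, X i ∉ pointIdeal x := by
  obtain ⟨i, hi⟩ := Function.ne_iff.mp x.rep_nonzero
  exact ⟨i, by simpa [mem_pointIdeal_iff (isHomogeneous_X K i)] using hi⟩

theorem eq_of_forall_rep_mul_rep_eq (h : ∀ i k, x.rep i * y.rep k = x.rep k * y.rep i) :
    x = y := by
  obtain ⟨k, hk⟩ : ∃ k, y.rep k ≠ 0 := Function.ne_iff.mp y.rep_nonzero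
  rw [← x.mk_rep, ← y.mk_rep, Projectivization.mk_eq_mk_iff']
  refine ⟨x.rep k / y.rep k, funext fun i ↦ ?_⟩
  rw [Pi.smul_apply, smul_eq_mul, div_mul_eq_mul_div, div_eq_iff hk, h]

theorem eq_of_pointIdeal_le (h : pointIdeal x ≤ pointIdeal y) : x = y := by
  refine eq_of_forall_rep_mul_rep_eq fun i k ↦ ?_
  let f : MvPolynomial σ K := C (x.rep i) * X k - C (x.rep k) * X i
  have hf : f.IsHomogeneous 1 := (isHomogeneous_C_mul_X _ _).sub (isHomogeneous_C_mul_X _ _)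
  have hx : f ∈ pointIdeal x := (mem_pointIdeal_iff hf).mpr (by simp [f, mul_comm])
  simpa [f, sub_eq_zero] using (mem_pointIdeal_iff hf).mp (h hx)

theorem exists_ncard_projectiveZeros_le_hilbertFun [Finite σ] [Finite K]
    {I : Ideal (MvPolynomial σ K)} (hI : I.IsHomogeneous (homogeneousSubmodule σ K)) :
    ∃ d, ∀ j, (projectiveZeros I).ncard ≤ hilbertFun (homogeneousSubmodule σ K) I (j + d) := by
  have := Fintype.ofFinite (projectiveZeros I)
  have hX (x : projectiveZeros I) : ∃ f ∈ homogeneousSubmodule σ K 1, f ∉ pointIdeal x.1 :=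
    (exists_X_notMem_pointIdeal x.1).imp' X fun i hi ↦ ⟨isHomogeneous_X K i, hi⟩
  obtain ⟨d, hd⟩ := exists_sum_hilbertFun_le (P := fun x : projectiveZeros I ↦ pointIdeal x.1)
    (fun _ ↦ isPrime_pointIdeal) (fun _ ↦ isHomogeneous_pointIdeal)
    (fun x y hxy h ↦ hxy (Subtype.ext (eq_of_pointIdeal_le h)))
    (fun x ↦ le_pointIdeal_of_mem_projectiveZeros hI x.2) hX 0
  refine ⟨d, fun j ↦ le_trans ?_ (hd j)⟩
  rw [← Nat.card_coe_set_eq, Nat.card_eq_fintype_card, ← Finset.card_univ, Finset.card_eq_sum_ones]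
  refine Finset.sum_le_sum fun x _ ↦ ?_
  obtain ⟨f, hf, hfx⟩ := hX x
  have := isPrime_pointIdeal (x := x.1)
  exact hilbertFun_pos hf hfx _

theorem exists_ncard_projectiveZeros_mul_le_of_minimalPrimes [Finite σ] [Finite K]
    {I : Ideal (MvPolynomial σ K)} (hI : I.IsHomogeneous (homogeneousSubmodule σ K))
    (hdim : ∀ Q ∈ I.minimalPrimes, 1 ≤ ringKrullDim (MvPolynomial σ K ⧸ Q)) {a : ℕ → ℕ} {p : ℕ}
    (h : ∀ Q ∈ I.minimalPrimes, ∃ c, ∀ j,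
      (projectiveZeros Q).ncard * a j ≤ p * hilbertFun (homogeneousSubmodule σ K) Q (j + c)) :
    ∃ c, ∀ j,
      (projectiveZeros I).ncard * a j ≤ p * hilbertFun (homogeneousSubmodule σ K) I (j + c) := by
  have : Fintype I.minimalPrimes := I.finite_minimalPrimes_of_isNoetherianRing.fintype
  choose c hc using fun Q : I.minimalPrimes ↦ h Q.1 Q.2
  obtain ⟨d, hd⟩ := exists_sum_hilbertFun_le (P := fun Q : I.minimalPrimes ↦ Q.1)
    (fun Q ↦ Q.2.1.1) (fun Q ↦ isHomogeneous_of_mem_minimalPrimes _ hI Q.2)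
    (fun Q R hQR hle ↦ hQR (Subtype.ext (hle.antisymm (R.2.2 Q.2.1 hle)))) (fun Q ↦ Q.2.1.2)
    (fun Q ↦ exists_mem_notMem_of_hilbertFun_pos
      (hilbertFun_one_pos_of_one_le_ringKrullDim (hdim Q.1 Q.2))) c
  have hcard : (projectiveZeros I).ncard ≤ ∑ Q : I.minimalPrimes, (projectiveZeros Q.1).ncard := by
    refine (Set.ncard_le_ncard (projectiveZeros_subset_iUnion_minimalPrimes I)).trans ?_
    simpa only [Finset.mem_univ, Set.iUnion_true] using
      Finset.set_ncard_biUnion_le Finset.univ fun Q : I.minimalPrimes ↦ projectiveZeros Q.1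
  refine ⟨d, fun j ↦ ?_⟩
  calc (projectiveZeros I).ncard * a j
      ≤ ∑ Q : I.minimalPrimes, (projectiveZeros Q.1).ncard * a j := by
        rw [← Finset.sum_mul]
        gcongr
    _ ≤ ∑ Q : I.minimalPrimes, p * hilbertFun (homogeneousSubmodule σ K) Q.1 (j + c Q) :=
        Finset.sum_le_sum fun Q _ ↦ hc Q j
    _ ≤ p * hilbertFun (homogeneousSubmodule σ K) I (j + d) := by
        rw [← Finset.mul_sum]
        gcongr
        exact hd j

theorem exists_ncard_mul_le_ncard_projectiveZeros_sup_span [Finite σ] [Finite K]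
    {I : Ideal (MvPolynomial σ K)} {s : ℕ}
    (hs : hilbertFun (homogeneousSubmodule σ K) I 1 = s + 1) :
    ∃ f ∈ homogeneousSubmodule σ K 1, f ∉ I ∧
      (projectiveZeros I).ncard * ∑ i ∈ Finset.range s, Nat.card K ^ i ≤
        (∑ i ∈ Finset.range (s + 1), Nat.card K ^ i) *
          (projectiveZeros (I ⊔ Ideal.span {f})).ncard := by
  let π := (Ideal.Quotient.mkₐ K I).toLinearMap
  let U := (homogeneousSubmodule σ K 1).map π
  let evalAt (x : projectiveZeros I) : Module.Dual K U :=
    (Ideal.Quotient.liftₐ I (aeval x.1.rep) x.2).toLinearMap ∘ₗ U.subtype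
  have evalAt_π (x : projectiveZeros I) {f : MvPolynomial σ K} (hf : π f ∈ U) :
      evalAt x ⟨π f, hf⟩ = eval x.1.rep f := rfl
  have hevalAt (x : projectiveZeros I) : evalAt x ≠ 0 := by
    obtain ⟨i, hi⟩ := exists_X_notMem_pointIdeal x.1
    rw [mem_pointIdeal_iff (isHomogeneous_X K i),
      ← evalAt_π x (Submodule.mem_map_of_mem (isHomogeneous_X K i))] at hi
    exact fun h ↦ hi (by rw [h, LinearMap.zero_apply])
  obtain ⟨⟨_, f, hf, rfl⟩, hf0, hle⟩ := exists_ne_zero_natCard_mul_geom_sum_le hs evalAt hevalAt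
  refine ⟨f, hf, fun hfI ↦ hf0 (Subtype.ext (Ideal.Quotient.eq_zero_iff_mem.mpr hfI)), ?_⟩
  have hcard : Nat.card {x : projectiveZeros I // eval x.1.rep f = 0} =
      (projectiveZeros (I ⊔ Ideal.span {f})).ncard := by
    rw [projectiveZeros_sup_span_singleton, ← Nat.card_coe_set_eq]
    exact Nat.card_congr (Equiv.subtypeSubtypeEquivSubtypeInter (· ∈ projectiveZeros I)
      (fun x ↦ eval x.rep f = 0))
  rw [← Nat.card_coe_set_eq, ← hcard]
  exact hle

theorem exists_ncard_mul_le_ncard_hyperplane_section [Finite σ] [Finite K]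
    {I : Ideal (MvPolynomial σ K)} {n : ℕ}
    (hdim : (n + 1 : ℕ) ≤ ringKrullDim (MvPolynomial σ K ⧸ I)) :
    ∃ f ∈ homogeneousSubmodule σ K 1, f ∉ I ∧
      (projectiveZeros I).ncard * ∑ i ∈ Finset.range n, Nat.card K ^ i ≤
        (∑ i ∈ Finset.range (n + 1), Nat.card K ^ i) *
          (projectiveZeros (I ⊔ Ideal.span {f})).ncard := by
  have hn := hdim.trans
    (ringKrullDim_quotient_le_hilbertFun_one adjoin_homogeneousSubmodule_one I)
  norm_cast at hn
  obtain ⟨s, hs⟩ := Nat.exists_eq_add_one.mpr (Nat.zero_lt_of_lt hn)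
  obtain ⟨f, hf, hfI, hle⟩ := exists_ncard_mul_le_ncard_projectiveZeros_sup_span hs
  exact ⟨f, hf, hfI, mul_geom_sum_le_of_le (by omega) hle⟩

theorem ncard_mul_choose_succ_le_of_hyperplane_section [Finite σ] {P : Ideal (MvPolynomial σ K)}
    [P.IsPrime] {f : MvPolynomial σ K} (hf : f ∈ homogeneousSubmodule σ K 1) (hfP : f ∉ P)
    {n a b c : ℕ} (ha : 0 < a)
    (hab : (projectiveZeros P).ncard * a ≤ b * (projectiveZeros (P ⊔ Ideal.span {f})).ncard)
    (hc : ∀ j, (projectiveZeros (P ⊔ Ideal.span {f})).ncard * (j + n).choose n ≤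
      a * hilbertFun (homogeneousSubmodule σ K) (P ⊔ Ideal.span {f}) (j + c)) (j : ℕ) :
    (projectiveZeros P).ncard * (j + (n + 1)).choose (n + 1) ≤
      b * hilbertFun (homogeneousSubmodule σ K) P (j + (c + 1)) := by
  have hHF (j : ℕ) := hilbertFun_add_hilbertFun_sup_span_le hf hfP j
  simp only [add_comm 1] at hHF
  have hsum := mul_choose_succ_le_of_add_le_succ hHF hc j
  refine Nat.le_of_mul_le_mul_left ?_ ha
  calc a * ((projectiveZeros P).ncard * (j + (n + 1)).choose (n + 1))
      = (projectiveZeros P).ncard * a * (j + (n + 1)).choose (n + 1) := by ring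
    _ ≤ b * (projectiveZeros (P ⊔ Ideal.span {f})).ncard * (j + (n + 1)).choose (n + 1) := by
        gcongr
    _ = b * ((projectiveZeros (P ⊔ Ideal.span {f})).ncard * (j + (n + 1)).choose (n + 1)) := by
        ring
    _ ≤ b * (a * hilbertFun (homogeneousSubmodule σ K) P (j + (c + 1))) := by gcongr
    _ = a * (b * hilbertFun (homogeneousSubmodule σ K) P (j + (c + 1))) := by ring

theorem exists_ncard_projectiveZeros_mul_choose_le [Finite σ] [Finite K] {n : ℕ}
    {I : Ideal (MvPolynomial σ K)} (hI : I.IsHomogeneous (homogeneousSubmodule σ K))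
    (hdim : ∀ Q ∈ I.minimalPrimes, (n + 1 : ℕ) ≤ ringKrullDim (MvPolynomial σ K ⧸ Q)) :
    ∃ c, ∀ j, (projectiveZeros I).ncard * (j + n).choose n ≤
      (∑ i ∈ Finset.range (n + 1), Nat.card K ^ i) *
        hilbertFun (homogeneousSubmodule σ K) I (j + c) := by
  induction n generalizing I with
  | zero => simpa using exists_ncard_projectiveZeros_le_hilbertFun hI
  | succ n ih =>
    refine exists_ncard_projectiveZeros_mul_le_of_minimalPrimes hI
      (fun Q hQ ↦ le_trans (by norm_cast; omega) (hdim Q hQ)) fun P hPI ↦ ?_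
    have := hPI.1.1
    obtain ⟨f, hf, hfP, hle⟩ := exists_ncard_mul_le_ncard_hyperplane_section (hdim P hPI)
    have hhom : (P ⊔ Ideal.span {f}).IsHomogeneous (homogeneousSubmodule σ K) :=
      (isHomogeneous_of_mem_minimalPrimes _ hI hPI).sup
        (Ideal.homogeneous_span _ _ (by rintro _ rfl; exact ⟨1, hf⟩))
    have hdim' : ∀ Q ∈ (P ⊔ Ideal.span {f}).minimalPrimes,
        (n + 1 : ℕ) ≤ ringKrullDim (MvPolynomial σ K ⧸ Q) := fun Q hQ ↦ by
      have := (hdim P hPI).trans (ringKrullDim_quotient_le_of_mem_minimalPrimes_sup K hQ)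
      rw [Nat.cast_add_one (n + 1)] at this
      exact ENat.WithBot.add_le_add_one_right_iff.mp this
    obtain ⟨c, hc⟩ := ih hhom hdim'
    have hpos : 0 < ∑ i ∈ Finset.range (n + 1), Nat.card K ^ i :=
      Finset.sum_pos (fun _ _ ↦ pow_pos Finite.card_pos _) (by simp)
    exact ⟨c + 1, ncard_mul_choose_succ_le_of_hyperplane_section hf hfP hpos hle hc⟩

end ProjectivePoints

section LachaudBound

open Filter Polynomial Nat

attribute [local instance] MvPolynomial.gradedAlgebra

theorem pp_natCast (q n : ℕ) : pp q n = ∑ i ∈ Finset.range (n + 1), q ^ i := by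
  simp [pp]

theorem lachaud_bound_general {σ K : Type*} [Finite σ] [Field K] [Finite K]
    {I : Ideal (MvPolynomial σ K)} (hI : I.IsHomogeneous (homogeneousSubmodule σ K)) {n : ℕ}
    (hdim : ∀ Q ∈ I.minimalPrimes, (n + 1 : ℕ) ≤ ringKrullDim (MvPolynomial σ K ⧸ Q))
    {P : ℚ[X]} (hdeg : P.natDegree ≤ n)
    (hP : ∀ᶠ j : ℕ in atTop, (hilbertFun (homogeneousSubmodule σ K) I j : ℚ) ≤ P.eval (j : ℚ)) :
    ((projectiveZeros I).ncard : ℚ) ≤ n ! * P.coeff n * pp (Nat.card K) n := by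
  obtain ⟨c, hc⟩ := exists_ncard_projectiveZeros_mul_choose_le hI hdim
  rw [mul_comm]
  refine le_mul_coeff_of_eventually_mul_choose_le (c := c) (Nat.cast_nonneg _) hdeg ?_
  filter_upwards [(tendsto_add_atTop_nat c).eventually hP] with j hj
  refine le_trans (b := (pp (Nat.card K) n : ℚ) * hilbertFun _ I (j + c)) ?_ (by gcongr)
  rw [pp_natCast]
  exact_mod_cast hc j

end LachaudBound

/-- Lachaud's bound: an equidimensional projective variety `X ⊆ ℙ^m` over `F_q` of
dimension `n` and degree `δ` has at most `δ · p_n` rational points.  Here `X = V(I)`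
for a homogeneous ideal `I`; equidimensionality is expressed by all minimal primes of
`I` having cone dimension `n+1`, and the dimension `n` and degree `δ` are encoded by
the Hilbert polynomial `P` of `I`, which has degree `n` and leading coefficient
`δ / n!`. -/
theorem lachaud_bound (q m n δ : ℕ) {K : Type} [Field K] [Fintype K]
    (hq : Fintype.card K = q)
    (I : Ideal (MvPolynomial (Fin (m + 1)) K))
    (hhomgen : ∃ S : Set (MvPolynomial (Fin (m + 1)) K),
      (∀ f ∈ S, ∃ e, f.IsHomogeneous e) ∧ I = Ideal.span S)
    (hequi : ∀ P ∈ I.minimalPrimes,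
      ringKrullDim ((MvPolynomial (Fin (m + 1)) K) ⧸ P) = ((n + 1 : ℕ) : WithBot ℕ∞))
    (P : Polynomial ℚ) (hPdeg : P.natDegree = n)
    (hPlead : P.leadingCoeff = (δ : ℚ) / (Nat.factorial n : ℚ))
    (hhilb : ∃ j₀ : ℕ, ∀ j ≥ j₀, P.eval (j : ℚ) =
      ((Module.finrank K ↥(MvPolynomial.homogeneousSubmodule (Fin (m + 1)) K j)
        - Module.finrank K
            ↥(Submodule.restrictScalars K I ⊓ MvPolynomial.homogeneousSubmodule (Fin (m + 1)) K j)
        : ℕ) : ℚ)) :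
    Set.ncard {x : Projectivization K (Fin (m + 1) → K) | ∀ f ∈ I, eval x.rep f = 0}
      ≤ δ * pp q (n : ℤ) := by
  obtain ⟨S, hS, rfl⟩ := hhomgen
  obtain ⟨j₀, hj₀⟩ := hhilb
  let := gradedAlgebra (σ := Fin (m + 1)) (R := K)
  have := finite_homogeneousSubmodule (σ := Fin (m + 1)) (K := K)
  have hP : ∀ᶠ j : ℕ in Filter.atTop,
      (hilbertFun (homogeneousSubmodule (Fin (m + 1)) K) (Ideal.span S) j : ℚ) ≤
        P.eval (j : ℚ) := by
    filter_upwards [Filter.eventually_ge_atTop j₀] with j hj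
    rw [hj₀ j hj, hilbertFun_eq_sub]
  have h := lachaud_bound_general (Ideal.homogeneous_span _ S hS) (fun Q hQ ↦ (hequi Q hQ).ge)
    hPdeg.le hP
  rw [← hPdeg, Polynomial.coeff_natDegree, hPlead, hPdeg, mul_div_cancel₀ _ (by positivity),
    Nat.card_eq_fintype_card, hq] at h
  exact_mod_cast h
end

section
/- Assume $r \le m+1$ and $1 < d \le q$. If $F_1, \dots, F_r$ are linearly independent homogeneous polynomials of degree $d$ in $\mathbb{F}_q[x_0,\dots,x_m]$ having a common linear factor, then the number of their common zeros in $\mathbb{P}^m(\mathbb{F}_q)$ is at most $(d-1)q^{m-1} + p_{m-2} + \lfloor q^{m-r} \rfloor$. -/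
open MvPolynomial

/-- `flq q m r` is `⌊q^(m-r)⌋`: `q^(m-r)` for `r ≤ m` and `0` otherwise. -/
noncomputable def flq (q m r : ℕ) : ℕ := if r ≤ m then q ^ (m - r) else 0

/-!
The projective zeros split into the points of the common hyperplane `H = 0`, of which there are
`1 + q + ⋯ + q ^ (m - 1)`, and points of the affine space `H = 1`. On the latter the system reduces
to the cofactors `Fᵢ / H`, of degree at most `d - 1 < q`. Dehomogenised, they stay linearly
independent: a form of degree at most `q` that is divisible by `H` and vanishes wherever `H = 1`
vanishes everywhere, hence is zero. So the Heijnen–Pellikaan bound applies with `e = d - 1`.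

For the latter bound, `r` independent polynomials span a space with at least `r` leading
exponents, and the common zeros are at most as many as the exponents in `[0, q)^m` that dominate
none of these. To count such exponents, cut the box into slices `x i = t` in a direction `i` in
which some leading exponent is positive, and induct.
-/

section ExponentLayer

variable {σ : Type*} [DecidableEq σ] {M : Finset (σ →₀ ℕ)} {i : σ} {t e : ℕ}

/-- The members of `M` whose `i`-th exponent is `t`, with that exponent reset to zero: the
exponent vectors that `M` imposes on the slice `x i = t`. -/
noncomputable def exponentLayer (M : Finset (σ →₀ ℕ)) (i : σ) (t : ℕ) : Finset (σ →₀ ℕ) :=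
  {μ ∈ M | μ i = t}.image (Finsupp.erase i)

lemma mem_exponentLayer {ν : σ →₀ ℕ} :
    ν ∈ exponentLayer M i t ↔ ∃ μ ∈ M, μ i = t ∧ μ.erase i = ν := by
  simp [exponentLayer, and_assoc]

lemma card_exponentLayer (M : Finset (σ →₀ ℕ)) (i : σ) (t : ℕ) :
    (exponentLayer M i t).card = ({μ ∈ M | μ i = t} : Finset _).card := by
  refine Finset.card_image_of_injOn fun μ hμ ν hν h => ?_
  simp only [Finset.coe_filter, Set.mem_ofPred_eq] at hμ hν
  rw [← μ.erase_add_single i, ← ν.erase_add_single i, h, hμ.2, hν.2]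

lemma card_exponentLayer_lt {ν : σ →₀ ℕ} (hν : ν ∈ M) (hνt : ν i ≠ t) :
    (exponentLayer M i t).card < M.card := by
  rw [card_exponentLayer]
  exact Finset.card_lt_card (Finset.filter_ssubset.2 ⟨ν, hν, hνt⟩)

lemma degree_add_le_of_mem_exponentLayer (hM : ∀ μ ∈ M, μ.degree ≤ e) :
    ∀ ν ∈ exponentLayer M i t, ν.degree + t ≤ e := by
  rintro _ hν
  obtain ⟨μ, hμ, rfl, rfl⟩ := mem_exponentLayer.1 hν
  have hdeg := congrArg Finsupp.degree (μ.erase_add_single i)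
  rw [map_add, Finsupp.degree_single] at hdeg
  exact hdeg.trans_le (hM μ hμ)

lemma card_exponentLayer_zero {μ : σ →₀ ℕ} (hμ : μ ∈ M) (hμi : μ i ≠ 0)
    (huniq : ∀ μ' ∈ M, μ' i ≠ 0 → μ' = μ) : (exponentLayer M i 0).card = M.card - 1 := by
  rw [card_exponentLayer, ← Finset.card_erase_of_mem hμ]
  congr 1
  ext ν
  rw [Finset.mem_filter, Finset.mem_erase]
  refine ⟨fun h => ⟨?_, h.1⟩, fun h => ⟨h.2, not_not.1 (mt (huniq ν h.2) h.1)⟩⟩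
  rintro rfl
  exact hμi h.2

lemma one_lt_card_exponentLayer {μ μ' : σ →₀ ℕ} (hμ : μ ∈ M) (hμ' : μ' ∈ M) (hne : μ' ≠ μ)
    (heqi : μ' i = μ i) : 1 < (exponentLayer M i (μ i)).card := by
  rw [card_exponentLayer]
  exact Finset.one_lt_card.2 ⟨μ', by simp [hμ', heqi], μ, by simp [hμ], hne⟩

lemma card_image_tsub_single (hall : ∀ ν ∈ M, ν i ≠ 0) :
    (M.image (· - Finsupp.single i 1)).card = M.card :=
  Finset.card_image_of_injOn fun ν hν ξ hξ h => by
    rw [← Finsupp.sub_add_single_one_cancel (hall ν hν),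
      ← Finsupp.sub_add_single_one_cancel (hall ξ hξ)]
    exact congrArg (· + Finsupp.single i 1) h

lemma degree_le_sub_one_of_mem_image_tsub_single (hall : ∀ ν ∈ M, ν i ≠ 0)
    (hM : ∀ μ ∈ M, μ.degree ≤ e) :
    ∀ ν ∈ M.image (· - Finsupp.single i 1), ν.degree ≤ e - 1 := by
  refine Finset.forall_mem_image.2 fun ν hν => Nat.le_sub_of_add_le (le_trans ?_ (hM ν hν))
  conv_rhs => rw [← Finsupp.sub_add_single_one_cancel (hall ν hν), map_add, Finsupp.degree_single]

end ExponentLayer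

section Footprint

variable {σ : Type*} [Fintype σ] [DecidableEq σ] {q : ℕ} {M : Finset (σ →₀ ℕ)} {i : σ}

/-- The footprint of a set `M` of exponent vectors: the exponent vectors in the box `[0, q)^σ`
that do not dominate any member of `M`. -/
def footprint (q : ℕ) (M : Finset (σ →₀ ℕ)) : Finset (σ → Fin q) :=
  {a | ∀ μ ∈ M, ∃ i, (a i : ℕ) < μ i}

/-- The size of the footprint measured in units of `q ^ (|σ| - 1)`, the size of a slice `x i = t`
of the box `[0, q)^σ`. -/
noncomputable def footprintRatio (q : ℕ) (M : Finset (σ →₀ ℕ)) : ℚ :=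
  q * (footprint q M).dens

lemma mem_footprint {a : σ → Fin q} :
    a ∈ footprint q M ↔ ∀ μ ∈ M, ∃ i, (a i : ℕ) < μ i := by
  simp [footprint]

lemma mul_dens_filter_apply_eq_le {S : Finset (σ → Fin q)}
    (hS : ∀ a ∈ S, ∀ s, Function.update a i s ∈ S) (t : ℕ) :
    q * (({a ∈ S | (a i : ℕ) = t} : Finset _).dens : ℚ) ≤ S.dens := by
  have hcard : q * ({a ∈ S | (a i : ℕ) = t} : Finset _).card ≤ S.card := by
    suffices ((Finset.univ : Finset (Fin q)) ×ˢ {a ∈ S | (a i : ℕ) = t}).card ≤ S.card by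
      simpa [Finset.card_product] using this
    refine Finset.card_le_card_of_injOn (fun p => Function.update p.2 i p.1) ?_ ?_
    · rintro ⟨s, a⟩ h
      simp only [Finset.coe_product, Set.mem_prod, Finset.mem_coe, Finset.mem_filter] at h
      exact hS a h.2.1 s
    · rintro ⟨s, a⟩ ha ⟨s', a'⟩ ha' h
      simp only [Finset.coe_product, Set.mem_prod, Finset.mem_coe, Finset.mem_filter] at ha ha' h
      have hs : s = s' := by simpa using congrFun h i
      have haa' : a i = a' i := Fin.ext (ha.2.2.trans ha'.2.2.symm)
      refine Prod.ext hs (funext fun j => ?_)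
      obtain rfl | hj := eq_or_ne j i
      · exact haa'
      · simpa [hj] using congrFun h j
  rw [Finset.nnratCast_dens, Finset.nnratCast_dens, ← mul_div_assoc]
  gcongr
  exact_mod_cast hcard

lemma mul_dens_filter_univ_le (i : σ) (t : ℕ) :
    q * (({a ∈ (Finset.univ : Finset (σ → Fin q)) | (a i : ℕ) = t} : Finset _).dens : ℚ) ≤ 1 :=
  (mul_dens_filter_apply_eq_le (fun _ _ _ => Finset.mem_univ _) t).trans
    (mod_cast Finset.dens_le_one)

lemma update_mem_footprint_exponentLayer {t : ℕ} :
    ∀ a ∈ footprint q (exponentLayer M i t), ∀ s,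
      Function.update a i s ∈ footprint q (exponentLayer M i t) := by
  refine fun a ha s => mem_footprint.2 fun ν hν => ?_
  obtain ⟨j, hj⟩ := mem_footprint.1 ha ν hν
  obtain ⟨μ, -, -, rfl⟩ := mem_exponentLayer.1 hν
  have hji : j ≠ i := by
    rintro rfl
    simp at hj
  exact ⟨j, by rwa [Function.update_of_ne hji]⟩

lemma mem_footprint_exponentLayer {a : σ → Fin q} {t : ℕ} (ha : a ∈ footprint q M)
    (hat : t ≤ a i) : a ∈ footprint q (exponentLayer M i t) := by
  refine mem_footprint.2 fun ν hν => ?_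
  obtain ⟨μ, hμ, rfl, rfl⟩ := mem_exponentLayer.1 hν
  obtain ⟨j, hj⟩ := mem_footprint.1 ha μ hμ
  have hji : j ≠ i := by
    rintro rfl
    omega
  exact ⟨j, by rwa [Finsupp.erase_ne hji]⟩

lemma mul_footprintRatio_le_sum (M : Finset (σ →₀ ℕ)) (i : σ) {u : ℕ → ℕ} (hu : ∀ j, u j ≤ j) :
    q * footprintRatio q M ≤ ∑ j ∈ Finset.range q, footprintRatio q (exponentLayer M i (u j)) := by
  have hcover : footprint q M ⊆ (Finset.range q).biUnion fun j =>
      {a ∈ footprint q (exponentLayer M i (u j)) | (a i : ℕ) = j} := fun a ha => by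
    simp only [Finset.mem_biUnion, Finset.mem_range, Finset.mem_filter]
    exact ⟨a i, (a i).is_lt, mem_footprint_exponentLayer ha (hu _), rfl⟩
  have hdens := (Finset.dens_le_dens hcover).trans Finset.dens_biUnion_le
  simp only [footprintRatio, ← Finset.mul_sum]
  gcongr
  calc (q : ℚ) * (footprint q M).dens
      ≤ q * ∑ j ∈ Finset.range q,
          (({a ∈ footprint q (exponentLayer M i (u j)) | (a i : ℕ) = j} : Finset _).dens : ℚ) := by
        gcongr
        exact_mod_cast hdens
    _ ≤ ∑ j ∈ Finset.range q, ((footprint q (exponentLayer M i (u j))).dens : ℚ) := by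
        rw [Finset.mul_sum]
        gcongr with j
        exact mul_dens_filter_apply_eq_le update_mem_footprint_exponentLayer j

/-- On the slices `x i = j` with `j < t`, `t ≤ j < s` and `s ≤ j` the members of `M` with `i`-th
exponent `0`, `t` and `s` respectively are still in force. -/
lemma mul_footprintRatio_le (M : Finset (σ →₀ ℕ)) (i : σ) {t s : ℕ} (hts : t ≤ s) (hsq : s ≤ q) :
    q * footprintRatio q M ≤ t * footprintRatio q (exponentLayer M i 0) +
      (s - t) * footprintRatio q (exponentLayer M i t) +
      (q - s) * footprintRatio q (exponentLayer M i s) := by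
  let u : ℕ → ℕ := fun j => if j < t then 0 else if j < s then t else s
  have hu : ∀ j, u j ≤ j := fun j => by simp only [u]; split_ifs <;> omega
  have hlow : ∀ j ∈ Finset.range t, u j = 0 := fun j hj => by
    simp only [Finset.mem_range] at hj
    simp [u, hj]
  have hmid : ∀ j ∈ Finset.Ico t s, u j = t := fun j hj => by
    simp only [Finset.mem_Ico] at hj
    simp [u, hj.2, hj.1.not_gt]
  have hhigh : ∀ j ∈ Finset.Ico s q, u j = s := fun j hj => by
    simp only [Finset.mem_Ico] at hj
    simp [u, hj.1.not_gt, (hts.trans hj.1).not_gt]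
  have hsum {I : Finset ℕ} {c : ℕ} (hI : ∀ j ∈ I, u j = c) :
      ∑ j ∈ I, footprintRatio q (exponentLayer M i (u j)) =
        I.card * footprintRatio q (exponentLayer M i c) := by
    rw [Finset.sum_congr rfl fun j hj => by rw [hI j hj], Finset.sum_const, nsmul_eq_mul]
  refine (mul_footprintRatio_le_sum M i hu).trans_eq ?_
  rw [← Finset.sum_range_add_sum_Ico _ hsq, ← Finset.sum_range_add_sum_Ico _ hts,
    hsum hlow, hsum hmid, hsum hhigh]
  simp [Nat.cast_sub, hts, hsq]

lemma footprintRatio_le_degree {μ : σ →₀ ℕ} (hμ : μ ∈ M) : footprintRatio q M ≤ μ.degree := by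
  have hcover : footprint q M ⊆ Finset.univ.biUnion fun i => (Finset.range (μ i)).biUnion fun t =>
      {a ∈ (Finset.univ : Finset (σ → Fin q)) | (a i : ℕ) = t} := fun a ha => by
    simpa using mem_footprint.1 ha μ hμ
  have hdens : ((footprint q M).dens : ℚ) ≤ ∑ i, ∑ t ∈ Finset.range (μ i),
      (({a ∈ (Finset.univ : Finset (σ → Fin q)) | (a i : ℕ) = t} : Finset _).dens : ℚ) := by
    exact_mod_cast (Finset.dens_le_dens hcover).trans (Finset.dens_biUnion_le.trans
      (Finset.sum_le_sum fun _ _ => Finset.dens_biUnion_le))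
  calc footprintRatio q M
      ≤ q * ∑ i, ∑ t ∈ Finset.range (μ i),
          (({a ∈ (Finset.univ : Finset (σ → Fin q)) | (a i : ℕ) = t} : Finset _).dens : ℚ) := by
        unfold footprintRatio
        gcongr
    _ ≤ ∑ i, ∑ _ ∈ Finset.range (μ i), (1 : ℚ) := by
        simp only [Finset.mul_sum]
        gcongr
        exact mul_dens_filter_univ_le _ _
    _ = μ.degree := by simp [Finsupp.degree_eq_sum]

lemma card_filter_footprint_apply_ne_zero_le (M : Finset (σ →₀ ℕ)) (i : σ) :
    ({a ∈ footprint q M | (a i : ℕ) ≠ 0} : Finset _).card ≤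
      (footprint q (M.image (· - Finsupp.single i 1))).card := by
  refine Finset.card_le_card_of_injOn (fun a => Function.update a i
    ⟨a i - 1, (Nat.sub_le _ _).trans_lt (a i).is_lt⟩) (fun a ha => ?_) fun a ha b hb hab => ?_
  · obtain ⟨ha, hai⟩ := Finset.mem_filter.1 ha
    refine mem_footprint.2 (Finset.forall_mem_image.2 fun μ hμ => ?_)
    obtain ⟨j, hj⟩ := mem_footprint.1 ha μ hμ
    refine ⟨j, ?_⟩
    obtain rfl | hji := eq_or_ne j i
    · simp only [Function.update_self, Finsupp.tsub_apply, Finsupp.single_eq_same]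
      omega
    · simpa [hji] using hj
  · simp only [Finset.coe_filter, Set.mem_ofPred_eq] at ha hb
    refine funext fun j => ?_
    obtain rfl | hji := eq_or_ne j i
    · have hj := congrArg Fin.val (congrFun hab j)
      simp only [Function.update_self] at hj
      exact Fin.ext (by omega)
    · simpa [hji] using congrFun hab j

lemma footprintRatio_le_image_tsub_single_add_one (M : Finset (σ →₀ ℕ)) (i : σ) :
    footprintRatio q M ≤ footprintRatio q (M.image (· - Finsupp.single i 1)) + 1 := by
  have hsplit : ((footprint q M).dens : ℚ) =
      (({a ∈ footprint q M | (a i : ℕ) ≠ 0} : Finset _).dens : ℚ) +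
        (({a ∈ footprint q M | ¬ (a i : ℕ) ≠ 0} : Finset _).dens : ℚ) := by
    exact_mod_cast (Finset.dens_filter_add_dens_filter_not_eq_dens _).symm
  have hzero : ({a ∈ footprint q M | ¬ (a i : ℕ) ≠ 0} : Finset _).dens ≤
      ({a ∈ (Finset.univ : Finset (σ → Fin q)) | (a i : ℕ) = 0} : Finset _).dens :=
    Finset.dens_le_dens fun a ha => by simpa using (Finset.mem_filter.1 ha).2
  have hpos : ({a ∈ footprint q M | (a i : ℕ) ≠ 0} : Finset _).dens ≤
      (footprint q (M.image (· - Finsupp.single i 1))).dens := by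
    unfold Finset.dens
    gcongr ?_ / _
    exact_mod_cast card_filter_footprint_apply_ne_zero_le M i
  rw [footprintRatio, hsplit, mul_add]
  exact add_le_add (mul_le_mul_of_nonneg_left (mod_cast hpos) q.cast_nonneg)
    ((mul_le_mul_of_nonneg_left (mod_cast hzero) q.cast_nonneg).trans
      (mul_dens_filter_univ_le i 0))

end Footprint

section FootprintBound

variable {σ : Type*} [Fintype σ] [DecidableEq σ] {q e : ℕ} {M : Finset (σ →₀ ℕ)} {i : σ}

lemma footprintRatio_exponentLayer_le (hM : ∀ μ ∈ M, μ.degree ≤ e) {μ : σ →₀ ℕ} (hμ : μ ∈ M) :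
    footprintRatio q (exponentLayer M i (μ i)) ≤ e - μ i := by
  have hmem : μ.erase i ∈ exponentLayer M i (μ i) := mem_exponentLayer.2 ⟨μ, hμ, rfl, rfl⟩
  have hdeg := degree_add_le_of_mem_exponentLayer hM _ hmem
  rw [le_sub_iff_add_le]
  calc footprintRatio q (exponentLayer M i (μ i)) + μ i
      ≤ (μ.erase i).degree + μ i := by gcongr; exact footprintRatio_le_degree hmem
    _ ≤ e := by exact_mod_cast hdeg

lemma mul_footprintRatio_le_two_layers (M : Finset (σ →₀ ℕ)) (i : σ) {t : ℕ} (htq : t ≤ q) :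
    q * footprintRatio q M ≤ t * footprintRatio q (exponentLayer M i 0) +
      (q - t) * footprintRatio q (exponentLayer M i t) := by
  simpa using mul_footprintRatio_le M i le_rfl htq

/-- For `t = μ i`, the two kinds of slices contribute `t * e + (q - t) * (e - t)`, which is
`q * e - t * (q - t)`, and `t * (q - t) ≥ q`. -/
lemma footprintRatio_le_of_two_le_apply (hM : ∀ μ ∈ M, μ.degree ≤ e) {ν μ : σ →₀ ℕ}
    (hν : ν ∈ M) (hμ : μ ∈ M) (hνi : ν i = 0) (hμi : 2 ≤ μ i) (hμq : μ i + 2 ≤ q) :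
    footprintRatio q M ≤ e - 1 := by
  have hlow := footprintRatio_exponentLayer_le (q := q) (i := i) hM hν
  have hhigh := footprintRatio_exponentLayer_le (q := q) (i := i) hM hμ
  have hsum := mul_footprintRatio_le_two_layers M i (show μ i ≤ q by omega)
  rw [hνi, Nat.cast_zero, sub_zero] at hlow
  have hμi' : (2 : ℚ) ≤ μ i := mod_cast hμi
  have hμq' : (μ i : ℚ) + 2 ≤ q := mod_cast hμq
  refine le_of_mul_le_mul_left ?_ (show (0 : ℚ) < q by linarith)
  calc q * footprintRatio q M ≤ μ i * e + (q - μ i) * (e - μ i) := by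
        refine hsum.trans ?_
        gcongr
        linarith
    _ ≤ q * (e - 1) := by nlinarith

lemma footprintRatio_le_of_apply_lt_apply (hM : ∀ μ ∈ M, μ.degree ≤ e) (heq : e < q)
    {ν μ μ' : σ →₀ ℕ} (hν : ν ∈ M) (hμ : μ ∈ M) (hμ' : μ' ∈ M) (hνi : ν i = 0)
    (hμi : 1 ≤ μ i) (hlt : μ i < μ' i) : footprintRatio q M ≤ e - 1 := by
  have hμ'e : μ' i ≤ e := (Finsupp.le_degree i μ').trans (hM μ' hμ')
  obtain hμi | hμi := hμi.lt_or_eq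
  · exact footprintRatio_le_of_two_le_apply hM hν hμ hνi hμi (by omega)
  have hlow := footprintRatio_exponentLayer_le (q := q) (i := i) hM hν
  have hmid := footprintRatio_exponentLayer_le (q := q) (i := i) hM hμ
  have hhigh := footprintRatio_exponentLayer_le (q := q) (i := i) hM hμ'
  have hsum := mul_footprintRatio_le M i hlt.le (show μ' i ≤ q by omega)
  rw [hνi, Nat.cast_zero, sub_zero] at hlow
  rw [← hμi, Nat.cast_one] at hmid hsum
  have hμ'i : (2 : ℚ) ≤ μ' i := by exact_mod_cast (by omega : 2 ≤ μ' i)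
  have hμ'q : (μ' i : ℚ) ≤ e := by exact_mod_cast hμ'e
  have heq' : (e : ℚ) + 1 ≤ q := by exact_mod_cast heq
  refine le_of_mul_le_mul_left ?_ (show (0 : ℚ) < q by linarith)
  calc q * footprintRatio q M ≤ 1 * e + (μ' i - 1) * (e - 1) + (q - μ' i) * (e - μ' i) := by
        refine hsum.trans ?_
        gcongr <;> linarith
    _ ≤ q * (e - 1) := by nlinarith

lemma footprintRatio_le_of_one_lt_card_exponentLayer (hM : ∀ μ ∈ M, μ.degree ≤ e) (heq : e < q)
    {ν μ : σ →₀ ℕ} (hν : ν ∈ M) (hμ : μ ∈ M) (hνi : ν i = 0) (hμi : 1 ≤ μ i)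
    (hcard : 1 < (exponentLayer M i (μ i)).card)
    (hlayer : footprintRatio q (exponentLayer M i (μ i)) ≤ e - μ i - 1 + (q : ℚ)⁻¹) :
    footprintRatio q M ≤ e - 1 := by
  have hμe : μ i + 1 ≤ e := by
    obtain ⟨ξ, hξ, hξ0⟩ := Finset.exists_mem_ne hcard 0
    have hdeg := degree_add_le_of_mem_exponentLayer hM ξ hξ
    have hpos := mt (Finsupp.degree_eq_zero_iff ξ).1 hξ0
    omega
  obtain hμi | hμi := hμi.lt_or_eq
  · exact footprintRatio_le_of_two_le_apply hM hν hμ hνi hμi (by omega)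
  have hlow := footprintRatio_exponentLayer_le (q := q) (i := i) hM hν
  have hsum := mul_footprintRatio_le_two_layers M i (show μ i ≤ q by omega)
  rw [hνi, Nat.cast_zero, sub_zero] at hlow
  rw [← hμi, Nat.cast_one] at hlayer hsum
  have hq : (3 : ℚ) ≤ q := by exact_mod_cast (by omega : 3 ≤ q)
  refine le_of_mul_le_mul_left ?_ (show (0 : ℚ) < q by linarith)
  calc q * footprintRatio q M ≤ 1 * e + (q - 1) * (e - 1 - 1 + (q : ℚ)⁻¹) := by
        refine hsum.trans ?_
        gcongr
        linarith
    _ = q * (e - 1) + (3 - q) - (q : ℚ)⁻¹ := by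
        field_simp
        ring
    _ ≤ q * (e - 1) := by
        have : (0 : ℚ) ≤ (q : ℚ)⁻¹ := by positivity
        linarith

lemma footprintRatio_le_of_exponentLayer_zero_le (hM : ∀ μ ∈ M, μ.degree ≤ e) (heq : e < q)
    {μ : σ →₀ ℕ} {n : ℕ} (hμ : μ ∈ M) (hμi : 1 ≤ μ i)
    (hlayer : footprintRatio q (exponentLayer M i 0) ≤ e - 1 + (q : ℚ)⁻¹ ^ n) :
    footprintRatio q M ≤ e - 1 + (q : ℚ)⁻¹ ^ (n + 1) := by
  have hμe : μ i ≤ e := (Finsupp.le_degree i μ).trans (hM μ hμ)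
  have hhigh := footprintRatio_exponentLayer_le (q := q) (i := i) hM hμ
  have hsum := mul_footprintRatio_le_two_layers M i (show μ i ≤ q by omega)
  have hμi' : (1 : ℚ) ≤ μ i := by exact_mod_cast hμi
  have hμq : (μ i : ℚ) + 1 ≤ q := by exact_mod_cast (by omega : μ i + 1 ≤ q)
  have hpow : (q : ℚ)⁻¹ ^ n ≤ 1 := pow_le_one₀ (by positivity) (Nat.cast_inv_le_one q)
  refine le_of_mul_le_mul_left ?_ (show (0 : ℚ) < q by linarith)
  calc q * footprintRatio q M
      ≤ μ i * (e - 1 + (q : ℚ)⁻¹ ^ n) + (q - μ i) * (e - μ i) := by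
        refine hsum.trans ?_
        gcongr
        linarith
    _ ≤ q * (e - 1) + (q : ℚ)⁻¹ ^ n := by
        nlinarith [mul_nonneg (sub_nonneg.2 hμi')
          (show 0 ≤ (q : ℚ) - μ i - (q : ℚ)⁻¹ ^ n by linarith)]
    _ = q * (e - 1 + (q : ℚ)⁻¹ ^ (n + 1)) := by
        rw [mul_add, pow_succ', mul_inv_cancel_left₀ (by linarith)]

lemma footprintRatio_le_of_two_apply_ne_zero (hM : ∀ μ ∈ M, μ.degree ≤ e) (heq : e < q)
    {ν μ μ' : σ →₀ ℕ} (hν : ν ∈ M) (hμ : μ ∈ M) (hμ' : μ' ∈ M) (hne : μ' ≠ μ) (hνi : ν i = 0)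
    (hμi : μ i ≠ 0) (hμ'i : μ' i ≠ 0)
    (hlayer : footprintRatio q (exponentLayer M i (μ i)) ≤ (e - μ i : ℕ) - 1 +
      (q : ℚ)⁻¹ ^ ((exponentLayer M i (μ i)).card - 1)) :
    footprintRatio q M ≤ e - 1 := by
  obtain hlt | heqi | hgt := lt_trichotomy (μ' i) (μ i)
  · exact footprintRatio_le_of_apply_lt_apply hM heq hν hμ' hμ hνi (by omega) hlt
  · have hcard := one_lt_card_exponentLayer hμ hμ' hne heqi
    refine footprintRatio_le_of_one_lt_card_exponentLayer hM heq hν hμ hνi (by omega) hcard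
      (hlayer.trans ?_)
    rw [Nat.cast_sub ((Finsupp.le_degree i μ).trans (hM μ hμ))]
    gcongr
    exact pow_le_of_le_one (by positivity) (Nat.cast_inv_le_one q) (by omega)
  · exact footprintRatio_le_of_apply_lt_apply hM heq hν hμ hμ' hνi (by omega) hgt

theorem footprintRatio_le (hM₀ : M.Nonempty) (hM : ∀ μ ∈ M, μ.degree ≤ e) (heq : e < q) :
    footprintRatio q M ≤ e - 1 + (q : ℚ)⁻¹ ^ (M.card - 1) := by
  induction hn : M.card + e using Nat.strong_induction_on generalizing M e with | _ n ih =>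
  subst hn
  obtain hcard | hcard := (Finset.one_le_card.2 hM₀).eq_or_lt
  · obtain ⟨μ, hμ⟩ := hM₀
    simpa [← hcard] using (footprintRatio_le_degree hμ).trans (Nat.cast_le.2 (hM μ hμ))
  obtain ⟨μ, hμ, hμ0⟩ := Finset.exists_mem_ne hcard 0
  obtain ⟨i, hμi : μ i ≠ 0⟩ := DFunLike.ne_iff.1 hμ0
  by_cases hall : ∀ ν ∈ M, ν i ≠ 0
  · have he : 1 ≤ e :=
      (Nat.one_le_iff_ne_zero.2 hμi).trans ((Finsupp.le_degree i μ).trans (hM μ hμ))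
    have hlower := ih _ (by rw [card_image_tsub_single hall]; omega) (hM₀.image _)
      (degree_le_sub_one_of_mem_image_tsub_single hall hM) (by omega) rfl
    rw [card_image_tsub_single hall, Nat.cast_sub he] at hlower
    linarith [footprintRatio_le_image_tsub_single_add_one (q := q) M i]
  push Not at hall
  obtain ⟨ν, hν, hνi⟩ := hall
  have hih {t : ℕ} {ξ : σ →₀ ℕ} (hξ : ξ ∈ M) (hξt : ξ i ≠ t)
      (hlayer : (exponentLayer M i t).Nonempty) :
      footprintRatio q (exponentLayer M i t) ≤ (e - t : ℕ) - 1 +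
        (q : ℚ)⁻¹ ^ ((exponentLayer M i t).card - 1) :=
    ih _ (by have := card_exponentLayer_lt hξ hξt; omega) hlayer (fun η hη =>
      Nat.le_sub_of_add_le (degree_add_le_of_mem_exponentLayer hM η hη)) (by omega) rfl
  by_cases huniq : ∀ μ' ∈ M, μ' i ≠ 0 → μ' = μ
  · have hcard₀ := card_exponentLayer_zero hμ hμi huniq
    have := footprintRatio_le_of_exponentLayer_zero_le hM heq hμ (by omega)
      (hih hμ hμi (Finset.card_pos.1 (by omega)))
    rwa [hcard₀, Nat.sub_add_cancel (by omega)] at this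
  push Not at huniq
  obtain ⟨μ', hμ', hμ'i, hne⟩ := huniq
  have hgain := footprintRatio_le_of_two_apply_ne_zero hM heq hν hμ hμ' hne hνi hμi hμ'i
    (hih hν (by omega) ⟨_, mem_exponentLayer.2 ⟨μ, hμ, rfl, rfl⟩⟩)
  exact hgain.trans (le_add_of_nonneg_right (by positivity))

lemma card_footprint_eq [Nonempty σ] (hq : q ≠ 0) (M : Finset (σ →₀ ℕ)) :
    ((footprint q M).card : ℚ) = q ^ (Fintype.card σ - 1) * footprintRatio q M := by
  have hpow : (q : ℚ) ^ (Fintype.card σ - 1) * q = q ^ Fintype.card σ :=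
    pow_sub_one_mul Fintype.card_ne_zero _
  rw [footprintRatio, ← mul_assoc, hpow, Finset.nnratCast_dens, Fintype.card_fun, Fintype.card_fin,
    Nat.cast_pow]
  field_simp

theorem card_footprint_le [Nonempty σ] (hM : ∀ μ ∈ M, μ.degree ≤ e) (he : 1 ≤ e) (heq : e < q)
    {r : ℕ} (hr : 1 ≤ r) (hrM : r ≤ M.card) :
    (footprint q M).card ≤ (e - 1) * q ^ (Fintype.card σ - 1) + flq q (Fintype.card σ) r := by
  obtain ⟨n, hn⟩ : ∃ n, Fintype.card σ = n + 1 :=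
    Nat.exists_eq_add_of_le' (Nat.one_le_iff_ne_zero.2 Fintype.card_ne_zero)
  have hq : (1 : ℚ) < q := mod_cast he.trans_lt heq
  have hpow_le : (q : ℚ)⁻¹ ^ (M.card - 1) ≤ (q : ℚ)⁻¹ ^ (r - 1) :=
    pow_le_pow_of_le_one (by positivity) (Nat.cast_inv_le_one q) (by omega)
  have hbound : ((footprint q M).card : ℚ) ≤
      ((e - 1) * q ^ n : ℕ) + (q : ℚ) ^ n * (q : ℚ)⁻¹ ^ (r - 1) := by
    have hratio := footprintRatio_le (Finset.card_pos.1 (by omega)) hM heq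
    rw [card_footprint_eq (by omega), hn, Nat.add_sub_cancel, Nat.cast_mul, Nat.cast_sub he,
      Nat.cast_pow, Nat.cast_one, mul_comm _ ((q : ℚ) ^ n), ← mul_add]
    gcongr
    exact hratio.trans (by gcongr)
  rw [hn, Nat.add_sub_cancel, flq]
  split_ifs with hrn
  · have hpow : (q : ℚ) ^ n * (q : ℚ)⁻¹ ^ (r - 1) = q ^ (n + 1 - r) := by
      rw [inv_pow, ← pow_sub₀ _ (by positivity) (by omega)]
      congr 1
      omega
    rw [hpow] at hbound
    exact_mod_cast hbound
  · have hpow : (q : ℚ) ^ n * (q : ℚ)⁻¹ ^ (r - 1) < 1 := by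
      rw [inv_pow, ← div_eq_mul_inv, div_lt_one (by positivity)]
      exact pow_lt_pow_right₀ hq (by omega)
    exact Nat.lt_succ_iff.1 (mod_cast hbound.trans_lt ((add_lt_add_iff_left _).2 hpow))

end FootprintBound

section LeadingExponents

variable {σ K : Type*} [Field K]

/-- The exponents of the leading monomials, for the monomial order `ord`, of the nonzero
polynomials in `V`. -/
def leadingExponents (ord : MonomialOrder σ) (V : Submodule K (MvPolynomial σ K)) :
    Set (σ →₀ ℕ) :=
  ord.degree '' {f | f ∈ V ∧ f ≠ 0}

lemma leadingExponents_mono (ord : MonomialOrder σ) {V W : Submodule K (MvPolynomial σ K)}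
    (h : V ≤ W) : leadingExponents ord V ⊆ leadingExponents ord W :=
  Set.image_mono fun _ hf => ⟨h hf.1, hf.2⟩

lemma finrank_le_card_of_leadingExponents_subset {ord : MonomialOrder σ}
    {V : Submodule K (MvPolynomial σ K)} {M : Finset (σ →₀ ℕ)}
    (hM : leadingExponents ord V ⊆ M) : Module.finrank K V ≤ M.card := by
  let coeffs : V →ₗ[K] (M → K) := LinearMap.pi fun ν => lcoeff K ν.1 ∘ₗ V.subtype
  have hinj : Function.Injective coeffs := by
    rw [← LinearMap.ker_eq_bot, LinearMap.ker_eq_bot']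
    intro f hf
    by_contra hf0
    have hf0' : (f : MvPolynomial σ K) ≠ 0 := fun h => hf0 (Subtype.ext h)
    exact ord.coeff_degree_ne_zero_iff.2 hf0'
      (congrFun hf ⟨_, hM (Set.mem_image_of_mem _ ⟨f.2, hf0'⟩)⟩)
  simpa using LinearMap.finrank_le_finrank_of_injective hinj

lemma exists_sub_mem_forall_mem_support_not_le (ord : MonomialOrder σ)
    (I : Ideal (MvPolynomial σ K)) (p : MvPolynomial σ K) :
    ∃ r, p - r ∈ I ∧
      ∀ c ∈ r.support, ∀ μ ∈ leadingExponents ord (I.restrictScalars K), ¬ μ ≤ c := by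
  obtain ⟨g, r, hp, -, hr⟩ := ord.div_set (B := {f | f ∈ I ∧ f ≠ 0})
    (fun b hb => (ord.leadingCoeff_ne_zero_iff.2 hb.2).isUnit) p
  refine ⟨r, ?_, fun c hc μ ⟨b, hb, hbμ⟩ => hbμ ▸ hr c hc b hb⟩
  rw [hp, add_sub_cancel_right, Finsupp.linearCombination_apply]
  exact I.sum_mem fun b _ => I.mul_mem_left _ b.2.1

lemma degree_X_pow_sub_X (ord : MonomialOrder σ) (i : σ) {q : ℕ} (hq : 1 < q) :
    ord.degree (X i ^ q - X i : MvPolynomial σ K) = Finsupp.single i q := by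
  have hdeg : ord.degree (X i ^ q : MvPolynomial σ K) = Finsupp.single i q := by
    simp [ord.degree_pow, ord.degree_X]
  rw [ord.degree_sub_of_lt, hdeg]
  rw [hdeg, ord.degree_X]
  refine ord.toSyn_strictMono (lt_of_le_of_ne (Finsupp.single_mono hq.le) fun h => ?_)
  exact hq.ne (Finsupp.single_injective i h)

end LeadingExponents

section CommonZeros

variable {σ K : Type*} [Field K]

lemma single_card_mem_leadingExponents [Fintype K] (ord : MonomialOrder σ) (X : Set (σ → K))
    (i : σ) : Finsupp.single i (Fintype.card K)
      ∈ leadingExponents ord ((vanishingIdeal K X).restrictScalars K) := by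
  have hdeg := degree_X_pow_sub_X (K := K) ord i (Fintype.one_lt_card (α := K))
  refine ⟨_, ⟨fun x _ => by simp [FiniteField.pow_card], fun h => ?_⟩, hdeg⟩
  rw [h] at hdeg
  simp [eq_comm] at hdeg

lemma ncard_le_card_of_forall_leadingExponents_not_le [Finite σ] [Finite K]
    {ord : MonomialOrder σ} {X : Set (σ → K)} {S : Finset (σ →₀ ℕ)}
    (hS : ∀ c, (∀ μ ∈ leadingExponents ord ((vanishingIdeal K X).restrictScalars K), ¬ μ ≤ c) →
      c ∈ S) : X.ncard ≤ S.card := by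
  have := Fintype.ofFinite K
  let ev : restrictSupport K (S : Set (σ →₀ ℕ)) →ₗ[K] (X → K) :=
    LinearMap.funLeft K K Subtype.val ∘ₗ evalₗ K σ ∘ₗ Submodule.subtype _
  have hev : Function.Surjective ev := by
    intro g
    obtain ⟨p, -, hp⟩ : Function.extend Subtype.val g 0
        ∈ (restrictDegree σ K (Fintype.card K - 1)).map (evalₗ K σ) :=
      map_restrict_dom_evalₗ K σ ▸ Submodule.mem_top
    obtain ⟨r, hpr, hr⟩ := exists_sub_mem_forall_mem_support_not_le ord (vanishingIdeal K X) p
    refine ⟨⟨r, (mem_restrictSupport_iff K).2 fun c hc => hS c (hr c hc)⟩, funext fun x => ?_⟩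
    have hpr : eval (x : σ → K) p - eval (x : σ → K) r = 0 := by
      simpa [aeval_eq_eval] using hpr x x.2
    calc eval (x : σ → K) r = evalₗ K σ p x := (sub_eq_zero.1 hpr).symm
      _ = g x := by rw [hp, Subtype.val_injective.extend_apply]
  have := (basisRestrictSupport K (S : Set (σ →₀ ℕ))).finiteDimensional_of_finite
  calc X.ncard = Module.finrank K (X → K) := by
        have := Fintype.ofFinite X
        rw [Module.finrank_fintype_fun_eq_card, ← Nat.card_eq_fintype_card, Nat.card_coe_set_eq]
    _ ≤ Module.finrank K (restrictSupport K (S : Set (σ →₀ ℕ))) :=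
      LinearMap.finrank_le_finrank_of_surjective hev
    _ = S.card := by
      rw [Module.finrank_eq_card_basis (basisRestrictSupport K _)]
      simp

lemma ncard_le_card_footprint [Fintype σ] [DecidableEq σ] [Fintype K] {ord : MonomialOrder σ}
    {X : Set (σ → K)} {M : Finset (σ →₀ ℕ)}
    (hM : ↑M ⊆ leadingExponents ord ((vanishingIdeal K X).restrictScalars K)) :
    X.ncard ≤ (footprint (Fintype.card K) M).card := by
  let toExponents : (σ → Fin (Fintype.card K)) → (σ →₀ ℕ) := fun a =>
    Finsupp.equivFunOnFinite.symm fun i => (a i : ℕ)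
  refine (ncard_le_card_of_forall_leadingExponents_not_le
    (ord := ord) (S := (footprint (Fintype.card K) M).image toExponents) fun c hc => ?_).trans
    Finset.card_image_le
  have hbox : ∀ i, c i < Fintype.card K := fun i => by
    simpa [Finsupp.single_le_iff] using hc _ (single_card_mem_leadingExponents ord X i)
  refine Finset.mem_image.2 ⟨fun i => ⟨c i, hbox i⟩, mem_footprint.2 fun μ hμ => ?_, ?_⟩
  · simpa [Finsupp.le_def] using hc μ (hM hμ)
  · ext i
    simp [toExponents]

lemma degree_le_of_mem_leadingExponents {ord : MonomialOrder σ} {e : ℕ}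
    {V : Submodule K (MvPolynomial σ K)} (hV : V ≤ restrictTotalDegree σ K e) :
    ∀ μ ∈ leadingExponents ord V, μ.degree ≤ e := by
  rintro _ ⟨f, ⟨hf, hf0⟩, rfl⟩
  exact (le_totalDegree (ord.degree_mem_support hf0)).trans
    ((mem_restrictTotalDegree σ e f).1 (hV hf))

/-- The **Heijnen–Pellikaan bound**. -/
theorem ncard_commonZeros_le {ι : Type*} [Fintype ι] [Nonempty ι] [Fintype σ] [Nonempty σ]
    [Fintype K] {e : ℕ} (he : 1 ≤ e) (heq : e < Fintype.card K)
    {f : ι → MvPolynomial σ K} (hf : LinearIndependent K f)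
    (hdeg : ∀ i, (f i).totalDegree ≤ e) :
    {x : σ → K | ∀ i, eval x (f i) = 0}.ncard ≤
      (e - 1) * Fintype.card K ^ (Fintype.card σ - 1) +
        flq (Fintype.card K) (Fintype.card σ) (Fintype.card ι) := by
  let : LinearOrder σ := .lift' _ (Fintype.equivFin σ).injective
  let ord : MonomialOrder σ := .lex
  set V := Submodule.span K (Set.range f)
  have hVdeg : V ≤ restrictTotalDegree σ K e :=
    Submodule.span_le.2 (Set.range_subset_iff.2 fun i => (mem_restrictTotalDegree σ e _).2 (hdeg i))
  have hVzero : V ≤ (vanishingIdeal K {x : σ → K | ∀ i, eval x (f i) = 0}).restrictScalars K :=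
    Submodule.span_le.2 (Set.range_subset_iff.2 fun i x hx => by
      simpa [aeval_eq_eval] using hx i)
  have hdegree := degree_le_of_mem_leadingExponents (ord := ord) hVdeg
  have hfinite : (leadingExponents ord V).Finite := (Finsupp.finite_of_degree_le e).subset hdegree
  have hrank : Fintype.card ι ≤ hfinite.toFinset.card := by
    rw [← finrank_span_eq_card hf]
    exact finrank_le_card_of_leadingExponents_subset (ord := ord) (by simp [V])
  exact (ncard_le_card_footprint (M := hfinite.toFinset)
    (by simpa using leadingExponents_mono ord hVzero)).trans
    (card_footprint_le (by simpa using hdegree) he heq Fintype.card_pos hrank)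

end CommonZeros

section LinearForm

variable {σ K : Type*} [Field K]

lemma eval_smul_eq_pow_mul_eval {d : ℕ} {p : MvPolynomial σ K} (hp : p.IsHomogeneous d) (c : K)
    (x : σ → K) : eval (c • x) p = c ^ d * eval x p := by
  rw [eval_eq, eval_eq, Finset.mul_sum]
  refine Finset.sum_congr rfl fun ν hν => ?_
  have hdeg : ν.degree = d := by
    rw [Finsupp.degree_eq_weight_one]
    exact hp (mem_support_iff.1 hν)
  simp only [Pi.smul_apply, smul_eq_mul, mul_pow, Finset.prod_mul_distrib]
  rw [Finset.prod_pow_eq_pow_sum, ← Finsupp.degree_apply, hdeg, mul_left_comm]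

lemma eq_zero_of_dvd_of_eval_eq_zero_of_eval_eq_one [Finite σ] [Fintype K] {d : ℕ}
    {H p : MvPolynomial σ K} (hH : H.IsHomogeneous 1) (hp : p.IsHomogeneous d)
    (hd : d ≤ Fintype.card K) (hdvd : H ∣ p) (hzero : ∀ x, eval x H = 1 → eval x p = 0) :
    p = 0 := by
  refine hp.eq_zero_of_forall_eval_eq_zero_of_le_card (fun x => ?_) (by simpa using hd)
  obtain hx | hx := eq_or_ne (eval x H) 0
  · exact zero_dvd_iff.1 (hx ▸ map_dvd (eval x) hdvd)
  · have hscale := hzero ((eval x H)⁻¹ • x)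
      (by rw [eval_smul_eq_pow_mul_eval hH, pow_one, inv_mul_cancel₀ hx])
    rw [eval_smul_eq_pow_mul_eval hp] at hscale
    exact (mul_eq_zero.1 hscale).resolve_left (pow_ne_zero _ (inv_ne_zero hx))

lemma exists_linearMap_eq_eval [Finite σ] {H : MvPolynomial σ K} (hH : H.IsHomogeneous 1) :
    ∃ φ : (σ → K) →ₗ[K] K, ∀ x, φ x = eval x H := by
  have := Fintype.ofFinite σ
  obtain ⟨a, rfl⟩ : ∃ a : σ → K, ∑ i, a i • X i = H := by
    rw [← Submodule.mem_span_range_iff_exists_fun, ← homogeneousSubmodule_one_eq_span_X]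
    exact hH
  exact ⟨Fintype.linearCombination K a, fun x => by
    simp [Fintype.linearCombination_apply, smul_eval, mul_comm]⟩

lemma linearMap_ne_zero_of_eq_eval [Finite σ] [Finite K] {H : MvPolynomial σ K}
    (hH : H.IsHomogeneous 1) (hH0 : H ≠ 0) {φ : (σ → K) →ₗ[K] K} (hφ : ∀ x, φ x = eval x H) :
    φ ≠ 0 := by
  rintro rfl
  exact hH0 (hH.eq_zero_of_forall_eval_eq_zero_of_le_card (fun x => (hφ x).symm)
    (by simpa using Cardinal.one_le_iff_ne_zero.2 (Cardinal.mk_ne_zero K)))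

lemma totalDegree_le_sub_of_mul {H G : MvPolynomial σ K} {n d : ℕ} (hH : H.IsHomogeneous n)
    (hHG : (H * G).IsHomogeneous d) (h0 : H * G ≠ 0) : G.totalDegree ≤ d - n := by
  have hH0 := left_ne_zero_of_mul h0
  have hsum := totalDegree_mul_of_isDomain hH0 (right_ne_zero_of_mul h0)
  rw [hHG.totalDegree h0, hH.totalDegree hH0] at hsum
  omega

end LinearForm

section Dehomogenization

variable {σ τ ι K : Type*} [Field K]

lemma totalDegree_bind₁_le {s : σ → MvPolynomial τ K} (hs : ∀ i, (s i).totalDegree ≤ 1)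
    (p : MvPolynomial σ K) : (bind₁ s p).totalDegree ≤ p.totalDegree := by
  rw [bind₁, aeval_def, eval₂_eq]
  refine totalDegree_finsetSum_le fun ν hν => ?_
  calc (algebraMap K _ (coeff ν p) * ∏ i ∈ ν.support, s i ^ ν i).totalDegree
      ≤ ∑ i ∈ ν.support, (s i ^ ν i).totalDegree := by
        refine (totalDegree_mul _ _).trans ?_
        rw [algebraMap_eq, totalDegree_C, zero_add]
        exact totalDegree_finsetProd _ _
    _ ≤ ∑ i ∈ ν.support, ν i := Finset.sum_le_sum fun i _ =>
        (totalDegree_pow _ _).trans (by simpa using Nat.mul_le_mul_left (ν i) (hs i))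
    _ ≤ p.totalDegree := le_totalDegree hν

lemma eval_bind₁_eq (s : σ → MvPolynomial τ K) (p : MvPolynomial σ K) (y : τ → K) :
    eval y (bind₁ s p) = eval (fun i => eval y (s i)) p :=
  eval₂Hom_bind₁ _ _ _ _

lemma linearMap_apply_eq_sum_single_mul [Fintype σ] [DecidableEq σ] (φ : (σ → K) →ₗ[K] K)
    (x : σ → K) : φ x = ∑ i, φ (Pi.single i 1) * x i := by
  conv_lhs => rw [← LinearMap.sum_single_apply (fun _ => K) x, map_sum]
  refine Finset.sum_congr rfl fun i _ => ?_
  rw [mul_comm, ← smul_eq_mul, ← map_smul, ← Pi.single_smul, smul_eq_mul, mul_one]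

lemma exists_affine_parametrization [Finite σ] {φ : (σ → K) →ₗ[K] K} (hφ : φ ≠ 0) :
    ∃ (k : σ) (s : σ → MvPolynomial {j // j ≠ k} K), (∀ i, (s i).totalDegree ≤ 1) ∧
      ∀ x, φ x = 1 → ∀ i, eval (fun j : {j // j ≠ k} => x j) (s i) = x i := by
  classical
  have := Fintype.ofFinite σ
  obtain ⟨k, hk⟩ : ∃ k, φ (Pi.single k 1) ≠ 0 := by
    by_contra! h
    exact hφ (LinearMap.pi_ext' fun k => LinearMap.ext_ring (h k))
  let u : MvPolynomial {j // j ≠ k} K :=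
    C (φ (Pi.single k 1))⁻¹ * (1 - ∑ j : {j // j ≠ k}, C (φ (Pi.single j.1 1)) * X j)
  refine ⟨k, fun i => if h : i = k then u else X ⟨i, h⟩, fun i => ?_, fun x hx i => ?_⟩
  · dsimp only
    split_ifs
    · refine (totalDegree_mul _ _).trans ?_
      rw [totalDegree_C, zero_add]
      refine (totalDegree_sub _ _).trans (max_le (by simp) ?_)
      exact totalDegree_finsetSum_le fun j _ => (totalDegree_mul _ _).trans (by simp)
    · simp
  · by_cases h : i = k
    · subst h
      have hsum : φ x = φ (Pi.single i 1) * x i +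
          ∑ j : {j // j ≠ i}, φ (Pi.single j.1 1) * x j := by
        rw [linearMap_apply_eq_sum_single_mul, Fintype.sum_eq_add_sum_subtype_ne _ i]
      have hu : eval (fun j : {j // j ≠ i} => x j) u = x i := by
        simp only [u, map_mul, map_sub, map_sum, map_one, eval_C, eval_X]
        rw [← eq_sub_iff_add_eq.2 (hsum.symm.trans hx), inv_mul_cancel_left₀ hk]
      simpa using hu
    · simp [h]

lemma linearIndependent_bind₁_cofactor [Finite σ] [Finite ι] [Fintype K] {d : ℕ}
    (hd : d ≤ Fintype.card K) {H : MvPolynomial σ K} (hH : H.IsHomogeneous 1)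
    {G : ι → MvPolynomial σ K} (hG : LinearIndependent K fun i => H * G i)
    (hhom : ∀ i, (H * G i).IsHomogeneous d) {s : σ → MvPolynomial τ K}
    {ρ : (σ → K) → τ → K} (hs : ∀ x, eval x H = 1 → ∀ i, eval (ρ x) (s i) = x i) :
    LinearIndependent K fun i => bind₁ s (G i) := by
  have := Fintype.ofFinite ι
  rw [Fintype.linearIndependent_iff] at hG ⊢
  intro c hc
  refine hG c (eq_zero_of_dvd_of_eval_eq_zero_of_eval_eq_one hH
    ((homogeneousSubmodule σ K d).sum_mem fun i _ =>
      (homogeneousSubmodule σ K d).smul_mem (c i) (hhom i)) hd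
    (Finset.dvd_sum fun i _ => dvd_smul_of_dvd (c i) (dvd_mul_right H (G i))) fun x hx => ?_)
  have heval := congrArg (eval (ρ x)) hc
  simpa only [map_sum, map_mul, smul_eval, eval_bind₁_eq, hs x hx, hx, one_mul, map_zero]
    using heval

lemma ncard_affine_commonZeros_le [Fintype σ] [Nontrivial σ] [Fintype ι] [Nonempty ι] [Fintype K]
    {d : ℕ} (hd : 1 < d) (hdq : d ≤ Fintype.card K) {H : MvPolynomial σ K}
    (hH : H.IsHomogeneous 1) {F : ι → MvPolynomial σ K} (hF : LinearIndependent K F)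
    (hhom : ∀ i, (F i).IsHomogeneous d) (hdvd : ∀ i, H ∣ F i) :
    {x | eval x H = 1 ∧ ∀ i, eval x (F i) = 0}.ncard ≤
      (d - 2) * Fintype.card K ^ (Fintype.card σ - 2) +
        flq (Fintype.card K) (Fintype.card σ - 1) (Fintype.card ι) := by
  classical
  choose G hG using hdvd
  obtain rfl : F = fun i => H * G i := funext hG
  obtain ⟨φ, hφ⟩ := exists_linearMap_eq_eval hH
  have hH0 : H ≠ 0 := left_ne_zero_of_mul (hF.ne_zero (Classical.arbitrary ι))
  obtain ⟨k, s, hsdeg, hs⟩ :=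
    exists_affine_parametrization (linearMap_ne_zero_of_eq_eval hH hH0 hφ)
  simp only [hφ] at hs
  have : Nonempty {j // j ≠ k} := nonempty_subtype.2 (exists_ne k)
  have hbound := ncard_commonZeros_le (e := d - 1) (by omega) (by omega)
    (linearIndependent_bind₁_cofactor hdq hH hF hhom hs) fun i =>
      (totalDegree_bind₁_le hsdeg _).trans
        (totalDegree_le_sub_of_mul hH (hhom i) (hF.ne_zero i))
  simp only [ne_eq, Fintype.card_subtype_compl, Fintype.card_unique, Nat.sub_sub] at hbound
  refine le_trans ?_ hbound
  refine Set.ncard_le_ncard_of_injOn (fun x j => x j) (fun x hx i => ?_) (fun x hx y hy h => ?_)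
    (Set.toFinite _)
  · simpa [eval_bind₁_eq, hs x hx.1, hx.1] using hx.2 i
  · funext i
    rw [← hs x hx.1, ← hs y hy.1]
    exact congrArg (fun z => eval z (s i)) h

end Dehomogenization

section Projective

variable {K : Type*} [Field K]

lemma ncard_projectivization_linearMap_eq_zero_le {V : Type*} [Fintype K] [AddCommGroup V]
    [Module K V] [Module.Finite K V] {m : ℕ} (hV : Module.finrank K V = m + 1) {φ : V →ₗ[K] K}
    (hφ : φ ≠ 0) :
    {x : Projectivization K V | φ x.rep = 0}.ncard ≤ ∑ i ∈ Finset.range m, Fintype.card K ^ i := by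
  have hker : Module.finrank K (LinearMap.ker φ) = m := by
    have := Module.Dual.finrank_ker_add_one_of_ne_zero (f := φ) hφ
    omega
  have : Finite V := Module.finite_of_finite K
  have hinj := (LinearMap.ker φ).injective_subtype
  have hsub : {x : Projectivization K V | φ x.rep = 0} ⊆
      Set.range (Projectivization.map (LinearMap.ker φ).subtype hinj) := fun x hx =>
    ⟨Projectivization.mk K ⟨x.rep, hx⟩ fun h => x.rep_nonzero (congrArg Subtype.val h), by
      rw [Projectivization.map_mk]
      exact x.mk_rep⟩
  refine (Set.ncard_le_ncard hsub (Set.toFinite _)).trans_eq ?_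
  rw [Set.ncard_range_of_injective (Projectivization.map_injective _ hinj),
    Projectivization.card_of_finrank K _ hker, Nat.card_eq_fintype_card]

lemma sum_range_pow_eq_pp_add (q : ℕ) {m : ℕ} (hm : 1 ≤ m) :
    ∑ i ∈ Finset.range m, q ^ i = pp q ((m : ℤ) - 2) + q ^ (m - 1) := by
  obtain ⟨n, rfl⟩ := Nat.exists_eq_add_of_le' hm
  rw [Finset.sum_range_succ, Nat.add_sub_cancel]
  congr 1
  unfold pp
  split_ifs with hneg
  · obtain rfl : n = 0 := by omega
    simp
  · congr 2
    omega

lemma ncard_projectivization_le_ncard_affine {σ ι : Type*} [Finite σ] [Finite K] {d : ι → ℕ}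
    {H : MvPolynomial σ K} (hH : H.IsHomogeneous 1) {F : ι → MvPolynomial σ K}
    (hhom : ∀ i, (F i).IsHomogeneous (d i)) :
    {x : Projectivization K (σ → K) | eval x.rep H ≠ 0 ∧ ∀ i, eval x.rep (F i) = 0}.ncard ≤
      {x | eval x H = 1 ∧ ∀ i, eval x (F i) = 0}.ncard := by
  refine Set.ncard_le_ncard_of_injOn (fun x => (eval x.rep H)⁻¹ • x.rep) ?_ ?_ (Set.toFinite _)
  · rintro x ⟨hx, hxF⟩
    refine ⟨?_, fun i => ?_⟩
    · rw [eval_smul_eq_pow_mul_eval hH, pow_one, inv_mul_cancel₀ hx]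
    · rw [eval_smul_eq_pow_mul_eval (hhom i), hxF i, mul_zero]
  · rintro x ⟨hx, -⟩ y - (h : (eval x.rep H)⁻¹ • x.rep = (eval y.rep H)⁻¹ • y.rep)
    rw [← x.mk_rep, ← y.mk_rep, Projectivization.mk_eq_mk_iff']
    refine ⟨eval x.rep H * (eval y.rep H)⁻¹, ?_⟩
    rw [mul_smul, ← h, smul_inv_smul₀ hx]

end Projective

theorem common_linear_factor_bound_general {d m : ℕ} {K σ ι : Type*} [Field K] [Fintype K]
    [Fintype σ] [Fintype ι] [Nonempty ι] (hσ : Fintype.card σ = m + 1) (hm : 1 ≤ m) (hd : 1 < d)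
    (hdq : d ≤ Fintype.card K) {F : ι → MvPolynomial σ K} (hF : LinearIndependent K F)
    (hhom : ∀ i, (F i).IsHomogeneous d)
    {H : MvPolynomial σ K} (hH : H.IsHomogeneous 1) (hdvd : ∀ i, H ∣ F i) :
    {x : Projectivization K (σ → K) | ∀ i, eval x.rep (F i) = 0}.ncard ≤
      (d - 1) * Fintype.card K ^ (m - 1) + pp (Fintype.card K) ((m : ℤ) - 2) +
        flq (Fintype.card K) m (Fintype.card ι) := by
  have hH0 : H ≠ 0 :=
    ne_zero_of_dvd_ne_zero (hF.ne_zero (Classical.arbitrary ι)) (hdvd (Classical.arbitrary ι))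
  obtain ⟨φ, hφ⟩ := exists_linearMap_eq_eval hH
  have : Nontrivial σ := Fintype.one_lt_card_iff_nontrivial.1 (by omega)
  have hhyperplane : {x : Projectivization K (σ → K) | eval x.rep H = 0}.ncard ≤
      pp (Fintype.card K) ((m : ℤ) - 2) + Fintype.card K ^ (m - 1) := by
    rw [← sum_range_pow_eq_pp_add _ hm]
    simpa only [hφ] using ncard_projectivization_linearMap_eq_zero_le (by simpa using hσ)
      (linearMap_ne_zero_of_eq_eval hH hH0 hφ)
  have haffine := (ncard_projectivization_le_ncard_affine hH hhom).trans
    (ncard_affine_commonZeros_le hd hdq hH hF hhom hdvd)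
  have hsplit : {x : Projectivization K (σ → K) | ∀ i, eval x.rep (F i) = 0} ⊆
      {x | eval x.rep H = 0} ∪ {x | eval x.rep H ≠ 0 ∧ ∀ i, eval x.rep (F i) = 0} := fun x hx =>
    (eq_or_ne (eval x.rep H) 0).imp id fun h => ⟨h, hx⟩
  have hle := (Set.ncard_le_ncard hsplit (Set.toFinite _)).trans (Set.ncard_union_le _ _)
  rw [show Fintype.card σ - 2 = m - 1 by omega, show Fintype.card σ - 1 = m by omega] at haffine
  rw [show d - 1 = d - 2 + 1 by omega, add_one_mul]
  omega

/-- If `r ≤ m+1`, `1 < d ≤ q`, and `F₁,…,F_r` are linearly independent homogeneous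
polynomials of degree `d` in `F_q[x₀,…,x_m]` having a common linear factor, then
`|V(F₁,…,F_r)| ≤ (d-1)q^(m-1) + p_(m-2) + ⌊q^(m-r)⌋`. -/
theorem common_linear_factor_bound (q d m r : ℕ) {K : Type} [Field K] [Fintype K]
    (hq : Fintype.card K = q) (hm : 1 ≤ m) (hr : 1 ≤ r) (hrm : r ≤ m + 1)
    (hd : 1 < d) (hdq : d ≤ q)
    (Fs : Fin r → MvPolynomial (Fin (m + 1)) K)
    (hli : LinearIndependent K Fs) (hhom : ∀ i, (Fs i).IsHomogeneous d)
    (hlin : ∃ H : MvPolynomial (Fin (m + 1)) K,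
      H.IsHomogeneous 1 ∧ H ≠ 0 ∧ ∀ i, H ∣ Fs i) :
    Set.ncard {x : Projectivization K (Fin (m + 1) → K) | ∀ i, eval x.rep (Fs i) = 0}
      ≤ (d - 1) * q ^ (m - 1) + pp q ((m : ℤ) - 2) + flq q m r := by
  subst hq
  obtain ⟨H, hH, -, hdvd⟩ := hlin
  have := Fin.pos_iff_nonempty.1 hr
  simpa using common_linear_factor_bound_general (by simp) hm hd hdq hli hhom hH hdvd
end

section
/- Assume $r > 1$ and $1 < d < q - 1$. If $F_1, \dots, F_r$ are linearly independent homogeneous polynomials of degree $d$ in $\mathbb{F}_q[x_0,\dots,x_m]$ such that some pair $F_i, F_j$ ($i \ne j$) has no nonconstant common factor, then $|V(F_1, \dots, F_r)| < (d-1)q^{m-1} + p_{m-2}$. -/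
open MvPolynomial

/-!
After a linear change of coordinates one of the two coprime forms `F`, `G` of degrees `d`, `e` does
not vanish at `(1, 0, …, 0)`, so their resultant `R` in `x₀` is a nonzero form of degree `d * e` in
the remaining variables. If the fibre over `a` contains `t` common zeros, the Sylvester matrix at
`a` has `t` linearly independent (Vandermonde) vectors in its left kernel, so `R` vanishes at `a` to
order `t`. The Schwartz–Zippel bound with multiplicities then bounds the number of common zeros in
affine space. Since `R` is a form, its order at the origin is `d * e`, although the fibre there is a
single point; this saving is exactly what turns the affine count into the bound `d * e * p_{m-2}`
for projective points, and `d ^ 2 * p_{m-2}` is small enough because `d < q - 1`.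
-/

section

open Finset
open scoped LinearAlgebra.Projectivization

/-! ### Evaluation of homogeneous polynomials -/

section Evaluation

variable {σ R : Type*} [CommSemiring R] {P : MvPolynomial σ R} {d : ℕ}

theorem eval_smul_of_isHomogeneous (hP : P.IsHomogeneous d) (c : R) (x : σ → R) :
    eval (c • x) P = c ^ d * eval x P := by
  simp only [eval_eq, Pi.smul_apply, smul_eq_mul, mul_pow, Finset.prod_mul_distrib, Finset.mul_sum]
  refine Finset.sum_congr rfl fun e he => ?_
  rw [Finset.prod_pow_eq_pow_sum, hP.degree_eq_sum_deg_support he]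
  ring

theorem eval_zero_of_isHomogeneous (hP : P.IsHomogeneous d) (hd : d ≠ 0) : eval 0 P = 0 := by
  simpa [hd] using eval_smul_of_isHomogeneous hP 0 0

theorem exists_ne_zero_eval_ne_zero_of_isHomogeneous {K : Type*} [Field K] [Fintype K]
    {F : MvPolynomial σ K} (hF : F.IsHomogeneous d) (hF0 : F ≠ 0) (hd : d ≠ 0)
    (hdK : d ≤ Fintype.card K) : ∃ v ≠ 0, eval v F ≠ 0 := by
  obtain ⟨v, hv⟩ : ∃ v, eval v F ≠ 0 := by
    by_contra! h
    exact hF0 (hF.eq_zero_of_forall_eval_eq_zero_of_le_card h (by simpa using hdK))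
  refine ⟨v, ?_, hv⟩
  rintro rfl
  exact hv (eval_zero_of_isHomogeneous hF hd)

end Evaluation

/-! ### Order of vanishing -/

section Vanishing

variable {σ τ R : Type*} [CommRing R] {n k : ℕ}

theorem ker_eval_zero (σ R : Type*) [CommRing R] :
    RingHom.ker (eval (0 : σ → R)) = idealOfVars σ R := by
  ext P
  rw [RingHom.mem_ker, ← pow_one (idealOfVars σ R), mem_pow_idealOfVars_iff']
  simp [← constantCoeff_eq, Finsupp.degree_eq_zero_iff, eval_zero]

theorem eval_eval_finSuccEquiv (b : R) (a : Fin n → R) (P : MvPolynomial (Fin (n + 1)) R) :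
    eval a ((finSuccEquiv R n P).eval (C b)) = eval (Fin.cons b a : Fin (n + 1) → R) P := by
  rw [eval_eq_eval_mv_eval', Polynomial.eval_map, ← Polynomial.eval₂_hom, eval_C]

/-- `P` vanishes at `a` to order at least `k`. The order is measured by powers of the ideal of `a`
rather than by Taylor coefficients, so that it is stable under products and determinants. -/
def VanishesToOrder (P : MvPolynomial σ R) (a : σ → R) (k : ℕ) : Prop :=
  P ∈ RingHom.ker (eval a) ^ k

namespace VanishesToOrder

variable {P : MvPolynomial σ R} {a : σ → R}

theorem zero_right (P : MvPolynomial σ R) (a : σ → R) : VanishesToOrder P a 0 := by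
  simp [VanishesToOrder]

theorem eval_eq_zero (h : VanishesToOrder P a k) (hk : k ≠ 0) : eval a P = 0 :=
  Ideal.pow_le_self hk h

theorem map {b : τ → R} (φ : MvPolynomial σ R →+* MvPolynomial τ R)
    (hφ : (eval b).comp φ = eval a) (h : VanishesToOrder P a k) : VanishesToOrder (φ P) b k := by
  have hker : (RingHom.ker (eval a)).map φ ≤ RingHom.ker (eval b) := by
    rw [Ideal.map_le_iff_le_comap, RingHom.comap_ker, hφ]
  have hφP := Ideal.mem_map_of_mem φ h
  rw [Ideal.map_pow] at hφP
  exact Ideal.pow_right_mono hker k hφP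

theorem of_isHomogeneous (hP : P.IsHomogeneous k) : VanishesToOrder P 0 k := by
  rw [VanishesToOrder, ker_eval_zero, mem_pow_idealOfVars_iff]
  exact fun e he => (hP.degree_eq_sum_deg_support he).le

theorem of_X_mul {i : σ} (h : VanishesToOrder (X i * P) 0 (k + 1)) : VanishesToOrder P 0 k := by
  rw [VanishesToOrder, ker_eval_zero, mem_pow_idealOfVars_iff'] at h ⊢
  intro e he
  rw [← coeff_X_mul e i]
  exact h _ (by rw [map_add, Finsupp.degree_single]; lia)

theorem of_X_sub_C_mul {i : σ} (h : VanishesToOrder ((X i - C (a i)) * P) a (k + 1)) :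
    VanishesToOrder P a k := by
  let φ : MvPolynomial σ R →ₐ[R] MvPolynomial σ R := aeval fun j => X j + C (a j)
  let ψ : MvPolynomial σ R →ₐ[R] MvPolynomial σ R := aeval fun j => X j - C (a j)
  have hψφ : ψ (φ P) = P := by
    have : ψ.comp φ = AlgHom.id R _ := by ext j; simp [φ, ψ, algHom_C, algebraMap_eq]
    exact DFunLike.congr_fun this P
  have hφ := h.map (b := 0) φ.toRingHom (by ext j <;> simp [φ, algHom_C, algebraMap_eq])
  have hφX : φ (X i - C (a i)) = X i := by simp [φ, algHom_C, algebraMap_eq]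
  have hφP : VanishesToOrder (φ P) 0 k := of_X_mul (i := i) <| by
    rwa [AlgHom.toRingHom_eq_coe, RingHom.coe_coe, map_mul, hφX] at hφ
  rw [← hψφ]
  exact hφP.map ψ.toRingHom (by ext j <;> simp [ψ, algHom_C, algebraMap_eq])

theorem eval_finSuccEquiv {b : R} {a : Fin n → R} {P : MvPolynomial (Fin (n + 1)) R}
    (h : VanishesToOrder P (Fin.cons b a : Fin (n + 1) → R) k) :
    VanishesToOrder ((finSuccEquiv R n P).eval (C b)) a k :=
  h.map ((Polynomial.evalRingHom (C b)).comp (finSuccEquiv R n).toRingHom) <|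
    RingHom.ext fun Q => eval_eval_finSuccEquiv b a Q

variable {K : Type*} [Field K] {P Q : MvPolynomial σ K} {a : σ → K}

theorem of_mul_of_eval_ne_zero (h : VanishesToOrder (P * Q) a k) (hP : eval a P ≠ 0) :
    VanishesToOrder Q a k := by
  rcases eq_or_ne k 0 with rfl | hk
  · exact zero_right Q a
  have : (RingHom.ker (eval a)).IsMaximal :=
    RingHom.ker_isMaximal_of_surjective _ fun c => ⟨C c, eval_C c⟩
  have hrad : (RingHom.ker (eval a) ^ k).radical = RingHom.ker (eval a) := by
    rw [Ideal.radical_pow _ hk, this.isPrime.radical]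
  have hprimary : (RingHom.ker (eval a) ^ k).IsPrimary :=
    Ideal.isPrimary_of_isMaximal_radical (by rwa [hrad])
  rw [VanishesToOrder, mul_comm] at h
  exact ((Ideal.isPrimary_iff.mp hprimary).2 h).resolve_right (by rwa [hrad])

theorem sub_ite_of_X_sub_C_mul [DecidableEq K] {i : σ} {b : K}
    (h : VanishesToOrder ((X i - C b) * P) a k) :
    VanishesToOrder P a (k - if a i = b then 1 else 0) := by
  split_ifs with hab
  · subst hab
    cases k with
    | zero => exact zero_right P a
    | succ k => exact of_X_sub_C_mul h
  · exact of_mul_of_eval_ne_zero h (by simpa [sub_eq_zero] using hab)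

end VanishesToOrder

end Vanishing

/-! ### The Schwartz–Zippel bound with multiplicities -/

section SchwartzZippel

variable {R : Type*} [CommRing R] {n : ℕ}

theorem totalDegree_X_sub_C [Nontrivial R] {σ : Type*} (i : σ) (b : R) :
    (X i - C b : MvPolynomial σ R).totalDegree = 1 := by
  rw [sub_eq_add_neg, ← C_neg, totalDegree_add_eq_left_of_totalDegree_lt (by simp), totalDegree_X]

theorem X_sub_C_dvd_of_eval_finSuccEquiv_eq_zero {b : R} {P : MvPolynomial (Fin (n + 1)) R}
    (h : (finSuccEquiv R n P).eval (C b) = 0) : X 0 - C b ∣ P := by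
  have hX : finSuccEquiv R n (X 0 - C b) = Polynomial.X - Polynomial.C (C b) := by
    rw [map_sub, finSuccEquiv_X_zero, finSuccEquiv_apply, coe_eval₂Hom, eval₂_C]
    rfl
  rw [← map_dvd_iff (finSuccEquiv R n), hX]
  exact Polynomial.dvd_iff_isRoot.mpr h

theorem totalDegree_eval_finSuccEquiv_le (b : R) (P : MvPolynomial (Fin (n + 1)) R) :
    ((finSuccEquiv R n P).eval (C b)).totalDegree ≤ P.totalDegree := by
  rw [Polynomial.eval_eq_sum, Polynomial.sum_def]
  refine totalDegree_finsetSum_le fun i hi => ?_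
  have := totalDegree_coeff_finSuccEquiv_add_le P i (Polynomial.mem_support_iff.mp hi)
  grw [← C_pow, totalDegree_mul, totalDegree_C]
  lia

theorem sum_piFinset_const_succ {α M : Type*} [AddCommMonoid M] (S : Finset α)
    (f : (Fin (n + 1) → α) → M) :
    ∑ x ∈ Fintype.piFinset (fun _ => S), f x =
      ∑ b ∈ S, ∑ a ∈ Fintype.piFinset (fun _ => S), f (Fin.cons b a) := by
  rw [← Finset.sum_product']
  refine (Finset.sum_equiv (Fin.consEquiv fun _ => α) (fun x => ?_) fun _ _ => rfl).symm
  simp [Fin.forall_fin_succ, Fin.consEquiv]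

theorem sum_piFinset_le_sum_sub_ite_add {α : Type*} [DecidableEq α] (S : Finset α) (b : α)
    (k : (Fin (n + 1) → α) → ℕ) :
    ∑ a ∈ Fintype.piFinset (fun _ => S), k a ≤
      ∑ a ∈ Fintype.piFinset (fun _ => S), (k a - if a 0 = b then 1 else 0) + #S ^ n := by
  have hslice : ∑ a ∈ Fintype.piFinset (fun _ : Fin (n + 1) => S), (if a 0 = b then 1 else 0) ≤
      #S ^ n := by
    rw [sum_piFinset_const_succ]
    by_cases hb : b ∈ S <;> simp [hb, Finset.sum_ite_eq']
  grw [← hslice, ← Finset.sum_add_distrib]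
  exact Finset.sum_le_sum fun a _ => le_tsub_add

theorem card_mul_sum_vanishingOrder_le {K : Type*} [Field K] (S : Finset K)
    {P : MvPolynomial (Fin n) K} (hP : P ≠ 0) {k : (Fin n → K) → ℕ}
    (hk : ∀ a ∈ Fintype.piFinset fun _ => S, VanishesToOrder P a (k a)) :
    #S * ∑ a ∈ Fintype.piFinset (fun _ => S), k a ≤ P.totalDegree * #S ^ n := by
  classical
  induction n with
  | zero =>
    obtain ⟨c, rfl⟩ := C_surjective (Fin 0) P
    have hk0 : k default = 0 := by
      by_contra h
      exact hP (by simpa using (hk default (by simp)).eval_eq_zero h)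
    simp [hk0]
  | succ n ihn =>
    induction hD : P.totalDegree using Nat.strong_induction_on generalizing P k with
    | h D ihD =>
      by_cases hb : ∃ b, (finSuccEquiv K n P).eval (C b) = 0
      · obtain ⟨b, hb⟩ := hb
        obtain ⟨Q, rfl⟩ := X_sub_C_dvd_of_eval_finSuccEquiv_eq_zero hb
        rw [totalDegree_mul_of_isDomain (left_ne_zero_of_mul hP) (right_ne_zero_of_mul hP),
          totalDegree_X_sub_C] at hD
        have hQ := ihD Q.totalDegree (by lia) (right_ne_zero_of_mul hP)
          (fun a ha => (hk a ha).sub_ite_of_X_sub_C_mul) rfl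
        grw [sum_piFinset_le_sum_sub_ite_add S b k, mul_add, hQ, ← hD]
        exact (by ring : _ = _).le
      · push Not at hb
        have hslice (b) (hbS : b ∈ S) := ihn (hb b) fun a ha =>
          (hk (Fin.cons b a) (by simp_all [Fin.forall_fin_succ])).eval_finSuccEquiv
        rw [sum_piFinset_const_succ, Finset.mul_sum]
        calc ∑ b ∈ S, #S * ∑ a ∈ Fintype.piFinset (fun _ => S), k (Fin.cons b a)
            ≤ ∑ _b ∈ S, D * #S ^ n := by
              refine Finset.sum_le_sum fun b hbS => (hslice b hbS).trans ?_
              grw [totalDegree_eval_finSuccEquiv_le, hD]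
          _ = D * #S ^ (n + 1) := by
              rw [Finset.sum_const, smul_eq_mul]
              ring

end SchwartzZippel

/-! ### Determinants in powers of an ideal -/

section Determinant

variable {K A ι n : Type*} [Field K] [CommRing A] [Fintype n] [DecidableEq n]

theorem det_mem_pow_card {T : Matrix n n A} {I : Ideal A} (s : Finset n)
    (hT : ∀ i ∈ s, ∀ j, T i j ∈ I) : T.det ∈ I ^ #s := by
  rw [Matrix.det_apply]
  refine Ideal.sum_mem _ fun τ _ => Submodule.smul_of_tower_mem _ _ ?_
  rw [← Equiv.prod_comp τ⁻¹, ← Finset.prod_mul_prod_compl s]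
  refine Ideal.mul_mem_right _ _ ?_
  rw [← Finset.prod_const]
  refine Ideal.prod_mem_prod fun i hi => ?_
  simpa using hT i hi _

theorem exists_isUnit_det_of_linearIndependent {w : ι → n → K} (hw : LinearIndependent K w) :
    ∃ (P : Matrix n n K) (e : ι ↪ n), IsUnit P.det ∧ ∀ c, P (e c) = w c := by
  classical
  let b := Module.Basis.sumExtend hw
  let e := (Pi.basisFun K n).indexEquiv b
  refine ⟨.of fun i => b (e i), Function.Embedding.inl.trans e.symm.toEmbedding, ?_, fun c => ?_⟩
  · rw [← Matrix.isUnit_iff_isUnit_det, ← Matrix.linearIndependent_rows_iff_isUnit]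
    exact b.linearIndependent.comp _ e.injective
  · have hbc : b (Sum.inl c) = w c := by
      simp only [b, Module.Basis.sumExtend, Module.Basis.reindex_apply,
        Module.Basis.extend_apply_self]
      rfl
    exact (congrArg b (e.apply_symm_apply (Sum.inl c))).trans hbc

theorem det_mem_pow_card_of_linearIndependent [Algebra K A] [Fintype ι] {S : Matrix n n A}
    {I : Ideal A} {w : ι → n → K} (hw : LinearIndependent K w)
    (h : ∀ c j, Matrix.vecMul (algebraMap K A ∘ w c) S j ∈ I) : S.det ∈ I ^ Fintype.card ι := by
  obtain ⟨P, e, hP, hPe⟩ := exists_isUnit_det_of_linearIndependent hw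
  have hPA : IsUnit (P.map (algebraMap K A)).det := by
    rw [← RingHom.mapMatrix_apply, ← RingHom.map_det]
    exact hP.map _
  rw [← Ideal.unit_mul_mem_iff_mem _ hPA, ← Matrix.det_mul, ← Finset.card_univ,
    ← Finset.card_map e]
  refine det_mem_pow_card _ fun i hi j => ?_
  obtain ⟨c, -, rfl⟩ := Finset.mem_map.mp hi
  have := h c j
  rwa [← hPe] at this

theorem linearIndependent_pow_of_injective [Fintype ι] {N : ℕ} (hN : Fintype.card ι ≤ N)
    {c : ι → K} (hc : Function.Injective c) :
    LinearIndependent K fun (l : ι) (i : Fin N) => c l ^ (i : ℕ) := by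
  let e := Fintype.equivFin ι
  have hV : IsUnit (Matrix.vandermonde (c ∘ e.symm)) :=
    (Matrix.isUnit_iff_isUnit_det _).mpr
      (Matrix.det_vandermonde_ne_zero_iff.mpr (hc.comp e.symm.injective)).isUnit
  have hrows := (Matrix.linearIndependent_rows_iff_isUnit.mpr hV).comp _ e.injective
  refine LinearIndependent.of_comp (LinearMap.funLeft K K (Fin.castLE hN)) ?_
  convert hrows using 1
  ext l i
  simp [Matrix.vandermonde]

end Determinant

/-! ### Resultants -/

section Resultant

variable {A : Type*} [CommRing A] {f g : Polynomial A} {m n : ℕ}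

theorem pow_vecMul_sylvester_eq_zero (hf : f.natDegree ≤ m) (hg : g.natDegree ≤ n) {c : A}
    (hfc : f.IsRoot c) (hgc : g.IsRoot c) :
    Matrix.vecMul (fun i : Fin (m + n) => c ^ (i : ℕ)) (f.sylvester g m n) = 0 := by
  rw [← Polynomial.toMatrix_sylvesterMap' f g hf hg]
  have hroot (x) : (Polynomial.sylvesterMap f g hf hg x : Polynomial A).eval c = 0 := by
    change (f * (x.2 : Polynomial A) + g * (x.1 : Polynomial A)).eval c = 0
    simp [hfc.eq_zero, hgc.eq_zero]
  ext j
  rw [Matrix.vecMul_eq_sum, Finset.sum_apply, Pi.zero_apply,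
    ← hroot (((Polynomial.degreeLT.basis A m).prod (Polynomial.degreeLT.basis A n)).reindex
      finSumFinEquiv j),
    Polynomial.eval_eq_sum_degreeLTEquiv (Subtype.property _)]
  refine Finset.sum_congr rfl fun i _ => ?_
  rw [Pi.smul_apply, smul_eq_mul, mul_comm, LinearMap.toMatrix_apply,
    Polynomial.degreeLT.basis_repr]
  rfl

theorem sylvesterMap_injective_of_isRelPrime [IsDomain A] [DecompositionMonoid (Polynomial A)]
    (hf : f.degree = m) (hg : g.natDegree ≤ n) (h : IsRelPrime f g) :
    Function.Injective
      (Polynomial.sylvesterMap f g (Polynomial.natDegree_eq_of_degree_eq_some hf).le hg) := by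
  rw [injective_iff_map_eq_zero]
  rintro ⟨p, q⟩ hpq
  have hrel : f * q + g * p = (0 : Polynomial A) := congrArg Subtype.val hpq
  have hdvd : f ∣ p := h.dvd_of_dvd_mul_left
    ((dvd_add_right (dvd_mul_right f _)).mp (hrel ▸ dvd_zero f))
  have hp : (p : Polynomial A) = 0 :=
    Polynomial.eq_zero_of_dvd_of_degree_lt hdvd (hf ▸ Polynomial.mem_degreeLT.mp p.2)
  have hf0 : f ≠ 0 := by
    rintro rfl
    simp at hf
  have hq : (q : Polynomial A) = 0 := by simpa [hp, hf0] using hrel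
  exact Prod.ext (Subtype.ext hp) (Subtype.ext hq)

theorem resultant_ne_zero_of_isRelPrime [IsDomain A] [DecompositionMonoid (Polynomial A)]
    (hf : f.degree = m) (hg : g.natDegree ≤ n) (h : IsRelPrime f g) : f.resultant g m n ≠ 0 := by
  intro hres
  obtain ⟨v, hv0, hv⟩ := Matrix.exists_mulVec_eq_zero_iff.mpr hres
  let b := ((Polynomial.degreeLT.basis A m).prod (Polynomial.degreeLT.basis A n)).reindex
    finSumFinEquiv
  rw [← Polynomial.toMatrix_sylvesterMap' f g (Polynomial.natDegree_eq_of_degree_eq_some hf).le hg,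
    ← b.equivFun.apply_symm_apply v, b.equivFun_apply, LinearMap.toMatrix_mulVec_repr] at hv
  have hx : b.equivFun.symm v = 0 := sylvesterMap_injective_of_isRelPrime hf hg h <|
    (Polynomial.degreeLT.basis A (m + n)).ext_elem fun i => by
      rw [hv, map_zero, map_zero]
      rfl
  exact hv0 (b.equivFun.symm.map_eq_zero_iff.mp hx)

theorem vanishesToOrder_resultant {σ K : Type*} [Field K] {f g : Polynomial (MvPolynomial σ K)}
    (hf : f.natDegree ≤ m) (hg : g.natDegree ≤ n) {a : σ → K} (hfa : f.map (eval a) ≠ 0)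
    {T : Finset K} (hfT : ∀ c ∈ T, (f.map (eval a)).IsRoot c)
    (hgT : ∀ c ∈ T, (g.map (eval a)).IsRoot c) :
    VanishesToOrder (f.resultant g m n) a #T := by
  have hcard : Fintype.card T ≤ m + n := by
    rw [Fintype.card_coe]
    have := Polynomial.card_le_degree_of_subset_roots (p := f.map (eval a)) (Z := T)
      fun c hc => (Polynomial.mem_roots hfa).mpr (hfT c hc)
    grw [this, Polynomial.natDegree_map_le, hf, ← Nat.le_add_right]
  rw [← Fintype.card_coe]
  refine det_mem_pow_card_of_linearIndependent
    (linearIndependent_pow_of_injective hcard Subtype.val_injective) fun c j => ?_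
  have hker := pow_vecMul_sylvester_eq_zero (Polynomial.natDegree_map_le.trans hf)
    (Polynomial.natDegree_map_le.trans hg) (hfT c c.2) (hgT c c.2)
  rw [Polynomial.sylvester_map_map] at hker
  have hpow : eval a ∘ algebraMap K (MvPolynomial σ K) ∘
      (fun i : Fin (m + n) => (c : K) ^ (i : ℕ)) = fun i : Fin (m + n) => (c : K) ^ (i : ℕ) := by
    ext i
    simp [algebraMap_eq]
  rw [RingHom.mem_ker, RingHom.map_vecMul, hpow]
  exact congrFun hker j

theorem isHomogeneous_det {σ R n : Type*} [CommRing R] [Fintype n] [DecidableEq n]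
    {S : Matrix n n (MvPolynomial σ R)} {u v : n → ℕ} {D : ℕ}
    (hS : ∀ i j, S i j ≠ 0 → ∃ e, e + u i = v j ∧ (S i j).IsHomogeneous e)
    (hD : D + ∑ i, u i = ∑ j, v j) : S.det.IsHomogeneous D := by
  rw [Matrix.det_apply]
  refine IsHomogeneous.sum _ _ _ fun τ _ =>
    Submodule.smul_of_tower_mem (homogeneousSubmodule σ R D) _ ?_
  rw [mem_homogeneousSubmodule]
  by_cases h0 : ∃ i, S (τ i) i = 0
  · obtain ⟨i, hi⟩ := h0
    rw [Finset.prod_eq_zero (f := fun i => S (τ i) i) (mem_univ i) hi]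
    exact isHomogeneous_zero _ _ _
  · push Not at h0
    choose e he hhom using fun i => hS (τ i) i (h0 i)
    have hsum : ∑ i, e i = D := by
      have := Finset.sum_congr rfl fun i (_ : i ∈ univ) => he i
      rw [Finset.sum_add_distrib, Equiv.sum_comp τ u] at this
      lia
    exact hsum ▸ IsHomogeneous.prod _ _ _ fun i _ => hhom i

theorem isHomogeneous_resultant {σ R : Type*} [CommRing R] {d e : ℕ}
    {f g : Polynomial (MvPolynomial σ R)} (hf : ∀ i ≤ d, (f.coeff i).IsHomogeneous (d - i))
    (hg : ∀ i ≤ e, (g.coeff i).IsHomogeneous (e - i)) :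
    (f.resultant g d e).IsHomogeneous (d * e) := by
  have hentry {p : Polynomial (MvPolynomial σ R)} {D : ℕ}
      (hp : ∀ i ≤ D, (p.coeff i).IsHomogeneous (D - i)) (i j : ℕ)
      (h : (if i ∈ Set.Icc j (j + D) then p.coeff (i - j) else 0) ≠ 0) :
      ∃ r, r + i = D + j ∧
        (if i ∈ Set.Icc j (j + D) then p.coeff (i - j) else 0).IsHomogeneous r := by
    obtain ⟨hij, -⟩ := ite_ne_right_iff.mp h
    rw [if_pos hij]
    obtain ⟨hji, hijD⟩ := hij
    exact ⟨D - (i - j), by lia, hp _ (by lia)⟩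
  refine isHomogeneous_det (n := Fin (d + e)) (u := fun i => (i : ℕ))
    (v := Fin.append (fun j : Fin d => e + (j : ℕ)) (fun j : Fin e => d + (j : ℕ))) ?_ ?_
  · intro i j
    induction j using Fin.addCases with
    | left j => simpa [Polynomial.sylvester] using hentry hg i j
    | right j => simpa [Polynomial.sylvester] using hentry hf i j
  · simp only [Fin.sum_univ_add, Fin.append_left, Fin.append_right, Fin.val_castAdd,
      Fin.val_natAdd, Finset.sum_add_distrib, Finset.sum_const, Finset.card_univ, Fintype.card_fin,
      smul_eq_mul]
    ring

end Resultant

/-! ### Elimination of the first variable -/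

section Elimination

variable {R : Type*} [CommRing R] {n d e : ℕ} {F G : MvPolynomial (Fin (n + 1)) R}

theorem natDegree_finSuccEquiv_le_of_isHomogeneous (hF : F.IsHomogeneous d) :
    (finSuccEquiv R n F).natDegree ≤ d := by
  rw [natDegree_finSuccEquiv]
  exact (degreeOf_le_totalDegree F 0).trans hF.totalDegree_le

theorem isHomogeneous_coeff_finSuccEquiv (hF : F.IsHomogeneous d) {i : ℕ} (hi : i ≤ d) :
    ((finSuccEquiv R n F).coeff i).IsHomogeneous (d - i) :=
  hF.finSuccEquiv_coeff_isHomogeneous i (d - i) (by lia)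

theorem coeff_finSuccEquiv_of_isHomogeneous (hF : F.IsHomogeneous d) :
    (finSuccEquiv R n F).coeff d = C (eval (Fin.cons 1 0 : Fin (n + 1) → R) F) := by
  have hlower (i) (hi : i ∈ range d) : eval 0 ((finSuccEquiv R n F).coeff i) = 0 := by
    have hi := mem_range.mp hi
    exact eval_zero_of_isHomogeneous (isHomogeneous_coeff_finSuccEquiv hF hi.le) (by lia)
  have hdeg : ((finSuccEquiv R n F).map (eval 0)).natDegree < d + 1 :=
    Nat.lt_succ_of_le <| Polynomial.natDegree_map_le.trans
      (natDegree_finSuccEquiv_le_of_isHomogeneous hF)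
  obtain ⟨c, hc⟩ : ∃ c, (finSuccEquiv R n F).coeff d = C c :=
    ⟨_, totalDegree_eq_zero_iff_eq_C.mp <| (totalDegree_zero_iff_isHomogeneous _).mpr
      (by simpa using isHomogeneous_coeff_finSuccEquiv hF le_rfl)⟩
  rw [eval_eq_eval_mv_eval', Polynomial.eval_eq_sum_range' hdeg, Finset.sum_range_succ,
    Finset.sum_eq_zero fun i hi => by rw [Polynomial.coeff_map, hlower i hi, zero_mul]]
  simp [hc]

/-- The resultant of `F` and `G` in the variable `x₀`, a polynomial in the remaining variables.
It is taken for formal degrees `d` and `e`, which for forms of these degrees makes it homogeneous of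
degree `d * e` whatever the leading coefficients. -/
noncomputable def eliminant (d e : ℕ) (F G : MvPolynomial (Fin (n + 1)) R) :
    MvPolynomial (Fin n) R :=
  (finSuccEquiv R n F).resultant (finSuccEquiv R n G) d e

theorem isHomogeneous_eliminant (hF : F.IsHomogeneous d) (hG : G.IsHomogeneous e) :
    (eliminant d e F G).IsHomogeneous (d * e) :=
  isHomogeneous_resultant (fun _ hi => isHomogeneous_coeff_finSuccEquiv hF hi)
    fun _ hi => isHomogeneous_coeff_finSuccEquiv hG hi

variable {K : Type*} [Field K] {F G : MvPolynomial (Fin (n + 1)) K}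

theorem eliminant_ne_zero (hF : F.IsHomogeneous d) (hG : G.IsHomogeneous e)
    (hFG : IsRelPrime F G) (hF1 : eval (Fin.cons 1 0 : Fin (n + 1) → K) F ≠ 0) :
    eliminant d e F G ≠ 0 := by
  have hdeg : (finSuccEquiv K n F).degree = d := by
    refine Polynomial.degree_eq_of_le_of_coeff_ne_zero ?_ ?_
    · exact Polynomial.degree_le_of_natDegree_le (natDegree_finSuccEquiv_le_of_isHomogeneous hF)
    · rwa [coeff_finSuccEquiv_of_isHomogeneous hF, C_ne_zero]
  refine resultant_ne_zero_of_isRelPrime hdeg (natDegree_finSuccEquiv_le_of_isHomogeneous hG) ?_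
  exact IsRelPrime.of_map (finSuccEquiv K n).symm (by simpa using hFG)

theorem vanishesToOrder_eliminant (hF : F.IsHomogeneous d) (hG : G.IsHomogeneous e)
    (hF1 : eval (Fin.cons 1 0 : Fin (n + 1) → K) F ≠ 0) (a : Fin n → K) {T : Finset K}
    (hT : ∀ c ∈ T, eval (Fin.cons c a : Fin (n + 1) → K) F = 0 ∧
      eval (Fin.cons c a : Fin (n + 1) → K) G = 0) :
    VanishesToOrder (eliminant d e F G) a #T := by
  have hFa : (finSuccEquiv K n F).map (eval a) ≠ 0 := fun h => hF1 <| by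
    simpa [coeff_finSuccEquiv_of_isHomogeneous hF] using congrArg (Polynomial.coeff · d) h
  simp only [eval_eq_eval_mv_eval'] at hT
  exact vanishesToOrder_resultant (natDegree_finSuccEquiv_le_of_isHomogeneous hF)
    (natDegree_finSuccEquiv_le_of_isHomogeneous hG) hFa (fun c hc => (hT c hc).1)
    fun c hc => (hT c hc).2

theorem card_fibre_zero_le_one [Fintype K] [DecidableEq K] (hF : F.IsHomogeneous d)
    (hF1 : eval (Fin.cons 1 0 : Fin (n + 1) → K) F ≠ 0) :
    #{c | eval (Fin.cons c 0 : Fin (n + 1) → K) F = 0} ≤ 1 := by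
  refine card_le_one_iff_subset_singleton.mpr ⟨0, fun c hc => ?_⟩
  have hcons : (Fin.cons c 0 : Fin (n + 1) → K) = c • (Fin.cons 1 0 : Fin (n + 1) → K) := by
    ext i
    cases i using Fin.cases <;> simp
  rw [mem_filter_univ, hcons, eval_smul_of_isHomogeneous hF] at hc
  exact mem_singleton.mpr (eq_zero_of_pow_eq_zero ((mul_eq_zero.mp hc).resolve_right hF1))

theorem card_filter_eq_sum_card_fibre {α : Type*} [Fintype α]
    (p : (Fin (n + 1) → α) → Prop) [DecidablePred p] :
    #{x | p x} = ∑ a : Fin n → α, #{c | p (Fin.cons c a)} := by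
  simp only [Finset.card_filter]
  rw [← (Fin.consEquiv fun _ => α).sum_comp, Fintype.sum_prod_type_right]
  rfl

theorem card_commonZeros_le_of_eval_ne_zero [Fintype K] [DecidableEq K]
    (hF : F.IsHomogeneous d) (hG : G.IsHomogeneous e) (hFG : IsRelPrime F G)
    (hF1 : eval (Fin.cons 1 0 : Fin (n + 1) → K) F ≠ 0) :
    Fintype.card K * (#{x | eval x F = 0 ∧ eval x G = 0} + d * e) ≤
      d * e * Fintype.card K ^ n + Fintype.card K := by
  let t (a : Fin n → K) : ℕ := #{c | eval (Fin.cons c a : Fin (n + 1) → K) F = 0 ∧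
    eval (Fin.cons c a : Fin (n + 1) → K) G = 0}
  have hR := isHomogeneous_eliminant hF hG
  have horder : ∀ a, VanishesToOrder (eliminant d e F G) a (Function.update t 0 (d * e) a) :=
    (Function.forall_update_iff t _).mpr ⟨VanishesToOrder.of_isHomogeneous hR,
      fun a _ => vanishesToOrder_eliminant hF hG hF1 a fun c hc => (mem_filter_univ c).mp hc⟩
  have ht0 : t 0 ≤ 1 :=
    (card_le_card (monotone_filter_right _ fun _ _ h => h.1)).trans (card_fibre_zero_le_one hF hF1)
  have hsum : #{x | eval x F = 0 ∧ eval x G = 0} + d * e ≤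
      ∑ a, Function.update t 0 (d * e) a + 1 := by
    rw [card_filter_eq_sum_card_fibre, ← add_sum_erase _ t (mem_univ 0),
      Finset.sum_update_of_mem (mem_univ 0), sdiff_singleton_eq_erase]
    lia
  have hbound := card_mul_sum_vanishingOrder_le univ (eliminant_ne_zero hF hG hFG hF1)
    fun a _ => horder a
  rw [Fintype.piFinset_univ, card_univ] at hbound
  grw [hsum, mul_add, hbound, hR.totalDegree_le, mul_one]

end Elimination

/-! ### Linear changes of coordinates -/

section LinearSubst

variable {σ R : Type*} [CommRing R] [Fintype σ] [DecidableEq σ]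

/-- The change of coordinates `P ↦ P ∘ g` for an invertible linear map `g`, used to move a
point where a form does not vanish to `(1, 0, …, 0)`. -/
noncomputable def linearSubst (g : (σ → R) ≃ₗ[R] (σ → R)) :
    MvPolynomial σ R ≃ₐ[R] MvPolynomial σ R :=
  AlgEquiv.ofAlgHom (bind₁ (LinearMap.toMatrix' (g : (σ → R) →ₗ[R] σ → R)).toMvPolynomial)
    (bind₁ (LinearMap.toMatrix' (g.symm : (σ → R) →ₗ[R] σ → R)).toMvPolynomial)
    (by ext1 i; simp [← Matrix.toMvPolynomial_mul, ← LinearMap.toMatrix'_comp])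
    (by ext1 i; simp [← Matrix.toMvPolynomial_mul, ← LinearMap.toMatrix'_comp])

theorem eval_linearSubst (g : (σ → R) ≃ₗ[R] (σ → R)) (x : σ → R) (P : MvPolynomial σ R) :
    eval x (linearSubst g P) = eval (g x) P := by
  have hx : (fun i => eval x
      ((LinearMap.toMatrix' (g : (σ → R) →ₗ[R] σ → R)).toMvPolynomial i)) = g x := by
    ext i
    rw [Matrix.toMvPolynomial_eval_eq_apply, LinearMap.toMatrix'_mulVec, LinearEquiv.coe_coe]
  change eval₂Hom (RingHom.id R) x (bind₁ _ P) = _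
  rw [eval₂Hom_bind₁]
  exact congrArg (eval · P) hx

theorem isHomogeneous_linearSubst (g : (σ → R) ≃ₗ[R] (σ → R)) {P : MvPolynomial σ R} {d : ℕ}
    (hP : P.IsHomogeneous d) : (linearSubst g P).IsHomogeneous d := by
  have := hP.aeval (n := 1) _
    (LinearMap.toMatrix' (g : (σ → R) →ₗ[R] σ → R)).toMvPolynomial_isHomogeneous
  rwa [one_mul] at this

theorem exists_linearEquiv_apply_eq {K V : Type*} [DivisionRing K] [AddCommGroup V] [Module K V]
    {v w : V} (hv : v ≠ 0) (hw : w ≠ 0) : ∃ g : V ≃ₗ[K] V, g v = w := by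
  obtain ⟨g, hg⟩ := Submodule.exists_linearEquiv_restrict_eq
    ((LinearEquiv.toSpanNonzeroSingleton K V v hv).symm ≪≫ₗ
      LinearEquiv.toSpanNonzeroSingleton K V w hw)
  have hcoord : (LinearEquiv.toSpanNonzeroSingleton K V v hv).symm
      ⟨v, Submodule.mem_span_singleton_self v⟩ = 1 := LinearEquiv.coord_self K V v hv
  exact ⟨g, by simp [← hg ⟨v, Submodule.mem_span_singleton_self v⟩, hcoord]⟩

theorem card_commonZeros_le {K : Type*} [Field K] [Fintype K] [DecidableEq K] {n d e : ℕ}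
    {F G : MvPolynomial (Fin (n + 1)) K} (hF : F.IsHomogeneous d) (hG : G.IsHomogeneous e)
    (hFG : IsRelPrime F G) (hF0 : F ≠ 0) (hd : d ≠ 0) (hdK : d ≤ Fintype.card K) :
    Fintype.card K * (#{x | eval x F = 0 ∧ eval x G = 0} + d * e) ≤
      d * e * Fintype.card K ^ n + Fintype.card K := by
  obtain ⟨v, hv0, hv⟩ := exists_ne_zero_eval_ne_zero_of_isHomogeneous hF hF0 hd hdK
  have hcons : (Fin.cons 1 0 : Fin (n + 1) → K) ≠ 0 := fun h => one_ne_zero (congrFun h 0)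
  obtain ⟨g, rfl⟩ := exists_linearEquiv_apply_eq (K := K) hcons hv0
  rw [← eval_linearSubst] at hv
  convert card_commonZeros_le_of_eval_ne_zero (isHomogeneous_linearSubst g hF)
    (isHomogeneous_linearSubst g hG)
    (IsRelPrime.of_map (linearSubst g).symm (by simpa using hFG)) hv using 3
  exact (card_equiv g.toEquiv fun x => by simp [eval_linearSubst]).symm

end LinearSubst

/-! ### Projective points -/

section Projective

variable {K : Type*} [Field K] [Fintype K]

theorem ncard_rep_mem_mul_add_one_le {V : Type*} [AddCommGroup V] [Module K V] [Finite V]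
    {S : Set V} (h0 : 0 ∈ S) (hS : ∀ (c : K), ∀ x ∈ S, c • x ∈ S) :
    {x : ℙ K V | x.rep ∈ S}.ncard * (Fintype.card K - 1) + 1 ≤ S.ncard := by
  classical
  let φ : Option ({x : ℙ K V | x.rep ∈ S} × Kˣ) → S := fun y =>
    y.elim ⟨0, h0⟩ fun y => ⟨(y.2 : K) • y.1.1.rep, hS _ _ y.1.2⟩
  have hφ : Function.Injective φ := by
    rintro (_ | ⟨x, u⟩) (_ | ⟨y, v⟩) h
    · rfl
    · exact absurd (congrArg Subtype.val h).symm
        (smul_ne_zero v.ne_zero (Projectivization.rep_nonzero _))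
    · exact absurd (congrArg Subtype.val h)
        (smul_ne_zero u.ne_zero (Projectivization.rep_nonzero _))
    · have hsmul : (u : K) • x.1.rep = (v : K) • y.1.rep := congrArg Subtype.val h
      have hxy : x = y := by
        ext1
        rw [← x.1.mk_rep, ← y.1.mk_rep, Projectivization.mk_eq_mk_iff']
        exact ⟨(u : K)⁻¹ * v, by rw [mul_smul, ← hsmul, inv_smul_smul₀ u.ne_zero]⟩
      subst hxy
      rw [Units.ext (smul_left_injective K x.1.rep_nonzero hsmul)]
  have hcard := Nat.card_le_card_of_injective φ hφ
  rwa [Finite.card_option, Nat.card_prod, Nat.card_coe_set_eq, Nat.card_coe_set_eq,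
    Nat.card_eq_fintype_card (α := Kˣ), Fintype.card_units] at hcard

theorem geom_sum_mul_sub_one_add_one {q : ℕ} (hq : 1 ≤ q) (k : ℕ) :
    (∑ i ∈ range k, q ^ i) * (q - 1) + 1 = q ^ k := by
  rw [geom_sum_mul_of_one_le hq, Nat.sub_add_cancel (Nat.one_le_pow k q hq)]

theorem ncard_projective_commonZeros_le {k d e : ℕ} {F G : MvPolynomial (Fin (k + 2)) K}
    (hF : F.IsHomogeneous d) (hG : G.IsHomogeneous e) (hFG : IsRelPrime F G) (hd : d ≠ 0)
    (he : e ≠ 0) (hdK : d ≤ Fintype.card K) :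
    {x : ℙ K (Fin (k + 2) → K) | eval x.rep F = 0 ∧ eval x.rep G = 0}.ncard ≤
      d * e * ∑ i ∈ range k, Fintype.card K ^ i := by
  classical
  have hF0 : F ≠ 0 := by
    rintro rfl
    exact not_isUnit_zero (eval_zero_of_isHomogeneous hG he ▸
      (isRelPrime_zero_left.mp hFG).map (eval 0))
  let S : Set (Fin (k + 2) → K) := {x | eval x F = 0 ∧ eval x G = 0}
  have hprojective : {x : ℙ K (Fin (k + 2) → K) | x.rep ∈ S}.ncard * (Fintype.card K - 1) + 1 ≤
      S.ncard :=
    ncard_rep_mem_mul_add_one_le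
      ⟨eval_zero_of_isHomogeneous hF hd, eval_zero_of_isHomogeneous hG he⟩ fun c x hx => by
        simp [S, eval_smul_of_isHomogeneous hF, eval_smul_of_isHomogeneous hG, hx.1, hx.2]
  have haffine : S.ncard + d * e ≤ d * e * Fintype.card K ^ k + 1 := by
    have hcard := card_commonZeros_le hF hG hFG hF0 hd hdK
    rw [← Set.ncard_coe_finset, coe_filter_univ, pow_succ', mul_left_comm, ← mul_add_one] at hcard
    exact Nat.le_of_mul_le_mul_left hcard Fintype.card_pos
  rw [← geom_sum_mul_sub_one_add_one Fintype.card_pos] at haffine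
  refine Nat.le_of_mul_le_mul_right (c := Fintype.card K - 1) ?_
    (Nat.sub_pos_of_lt Fintype.one_lt_card)
  change {x : ℙ K (Fin (k + 2) → K) | x.rep ∈ S}.ncard * (Fintype.card K - 1) ≤ _
  linarith

end Projective

theorem pp_sub_two (q : ℕ) {m : ℕ} (hm : 1 ≤ m) :
    pp q ((m : ℤ) - 2) = ∑ i ∈ range (m - 1), q ^ i := by
  unfold pp
  split_ifs with h
  · rw [show m - 1 = 0 by lia, Finset.sum_range_zero]
  · rw [show ((m : ℤ) - 2).toNat + 1 = m - 1 by lia]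

theorem mul_self_mul_lt_sub_one_mul_add {d t : ℕ} (hd : 1 < d) (hdt : d < t) (p : ℕ) :
    d * d * p < (d - 1) * (p * t + 1) + p := by
  obtain ⟨s, rfl⟩ : ∃ s, d = s + 1 := ⟨d - 1, by lia⟩
  have hp : s * p * (s + 2) ≤ s * p * t := by gcongr; lia
  calc (s + 1) * (s + 1) * p = s * p * (s + 2) + p := by ring
    _ < s * p * t + s + p := by lia
    _ = (s + 1 - 1) * (p * t + 1) + p := by rw [Nat.add_sub_cancel]; ring

theorem low_correlation_case1_general {K : Type*} [Field K] [Fintype K] {d m : ℕ} (hm : 1 ≤ m)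
    (hd : 1 < d) (hdK : d < Fintype.card K - 1) {F G : MvPolynomial (Fin (m + 1)) K}
    (hF : F.IsHomogeneous d) (hG : G.IsHomogeneous d) (hFG : IsRelPrime F G) :
    {x : ℙ K (Fin (m + 1) → K) | eval x.rep F = 0 ∧ eval x.rep G = 0}.ncard <
      (d - 1) * Fintype.card K ^ (m - 1) + pp (Fintype.card K) ((m : ℤ) - 2) := by
  rw [pp_sub_two _ hm, ← geom_sum_mul_sub_one_add_one Fintype.card_pos]
  obtain ⟨k, rfl⟩ := Nat.exists_eq_add_of_le' hm
  exact (ncard_projective_commonZeros_le hF hG hFG (by lia) (by lia) (by lia)).trans_lt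
    (mul_self_mul_lt_sub_one_mul_add hd hdK _)

end

/-- Low correlation, case 1: if `r > 1`, `1 < d < q-1`, and `F₁,…,F_r` are linearly
independent homogeneous polynomials of degree `d` in `F_q[x₀,…,x_m]` such that some
pair has no nonconstant common factor, then `|V(F₁,…,F_r)| < (d-1)q^(m-1) + p_(m-2)`. -/
theorem low_correlation_case1 (q d m r : ℕ) {K : Type} [Field K] [Fintype K]
    (hq : Fintype.card K = q) (hm : 1 ≤ m) (hr : 1 < r) (hd : 1 < d) (hdq : d < q - 1)
    (Fs : Fin r → MvPolynomial (Fin (m + 1)) K)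
    (hli : LinearIndependent K Fs) (hhom : ∀ i, (Fs i).IsHomogeneous d)
    (hcop : ∃ i j, i ≠ j ∧
      ∀ E : MvPolynomial (Fin (m + 1)) K, E ∣ Fs i → E ∣ Fs j → IsUnit E) :
    Set.ncard {x : Projectivization K (Fin (m + 1) → K) | ∀ i, eval x.rep (Fs i) = 0}
      < (d - 1) * q ^ (m - 1) + pp q ((m : ℤ) - 2) := by
  obtain ⟨i, j, -, hij⟩ := hcop
  subst hq
  refine (Set.ncard_le_ncard fun x hx => ?_).trans_lt
    (low_correlation_case1_general hm hd hdq (hhom i) (hhom j) fun E => hij E)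
  exact ⟨hx i, hx j⟩
end
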